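/- arXiv:math/0511114 — 8 statements merged into one kernel-verified Lean document; each statement's English description precedes it below -/
import Mathlib

section
/- Let c_n denote the number of pairs (f,g) of permutations of {1,…,n} having no common descent, i.e., such that there is no i ∈ {1,…,n−1} with both f(i) > f(i+1) and g(i) > g(i+1). Then c_0 = 1 and, for every n ≥ 1, c_n = Σ_{i=0}^{n−1} (−1)^{n+i+1} · C(n,i)² · c_i, where C(n,i) is the binomial coefficient. -/
/-!
Fix `n ≥ 1` and write `D = Des f ∩ Des g` for a pair `(f, g)` of permutations of `{1,…,n}`.
Let `tailCount n i` be the number of pairs for which `D` has no element below `i` and contains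
every position in `[i+1, n-1]`. It is computed in two ways.

* Such a pair is decreasing in both components on the last `n - i` positions, so each component is
  determined by the set of its first `i` values and by their relative order, a permutation of
  `{1,…,i}` with the same descents below `i` (`shuffle`). Hence
  `tailCount n i = C(n,i)² c_i` (`tailCount_eq`).
* The position `i` is either in `D` or not, so `D` is `[i, n-1]` or `[i+1, n-1]`. Therefore
  `tailCount n i = exactCount n i + exactCount n (i+1)`, where `exactCount n i` counts the
  pairs with `D = [i, n-1]`, and is set to `0` at `i = n + 1` (`tailCount_split`).

By the second formula the alternating sum of `tailCount n i` over `0 ≤ i ≤ n` telescopes to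
`± exactCount n 0 ± exactCount n (n+1)`, which is `0` because `0` is never a descent; by the first
this is the recursion.
-/

/-- The descent set of a permutation `f` of `{1,…,n}` (realized as `Equiv.Perm (Fin n)`
with 1-based positions: position `i` is the index `i-1` of `Fin n`):
`Des f = {i : 1 ≤ i ≤ n-1 and f(i) > f(i+1)}`. -/
def Des {n : ℕ} (f : Equiv.Perm (Fin n)) : Finset ℕ :=
  (Finset.Ico 1 n).filter fun i =>
    ∃ h : i < n, f ⟨i, h⟩ < f ⟨i - 1, Nat.lt_of_le_of_lt (Nat.sub_le i 1) h⟩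

/-- `c n` is the number of pairs `(f, g)` of permutations of `{1,…,n}` having no
common descent. -/
noncomputable def c (n : ℕ) : ℕ :=
  Nat.card {p : Equiv.Perm (Fin n) × Equiv.Perm (Fin n) // Des p.1 ∩ Des p.2 = ∅}

theorem mem_Des {n : ℕ} (f : Equiv.Perm (Fin n)) (j : ℕ) :
    j ∈ Des f ↔ 1 ≤ j ∧ ∃ h : j < n, f ⟨j, h⟩ < f ⟨j - 1, by omega⟩ := by
  unfold Des
  simp only [Finset.mem_filter, Finset.mem_Ico]
  constructor
  · rintro ⟨⟨h1, _⟩, h3⟩; exact ⟨h1, h3⟩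
  · rintro ⟨h1, h2, h3⟩; exact ⟨⟨h1, h2⟩, h2, h3⟩

/-! ### Permutations decreasing on their last `k` positions -/

theorem card_compl_of_card {i k : ℕ} {S : Finset (Fin (i + k))} (h : S.card = i) :
    Sᶜ.card = k := by
  rw [Finset.card_compl, h]; simp

/-- The permutation of `Fin (i + k)` whose first `i` values are the elements of `S`, arranged in
the relative order `σ`, and whose last `k` values are the elements of `Sᶜ` in decreasing order. -/
noncomputable def shuffle {i k : ℕ}
    (x : {S : Finset (Fin (i + k)) // S.card = i} × Equiv.Perm (Fin i)) :
    Equiv.Perm (Fin (i + k)) :=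
  finSumFinEquiv.symm.trans ((Equiv.sumCongr x.2 Fin.revPerm).trans
    (finSumEquivOfFinset x.1.2 (card_compl_of_card x.1.2)))

theorem shuffle_castAdd {i k : ℕ}
    (x : {S : Finset (Fin (i + k)) // S.card = i} × Equiv.Perm (Fin i)) (j : Fin i) :
    shuffle x (Fin.castAdd k j) = x.1.1.orderEmbOfFin x.1.2 (x.2 j) := by
  simp [shuffle]

theorem shuffle_natAdd {i k : ℕ}
    (x : {S : Finset (Fin (i + k)) // S.card = i} × Equiv.Perm (Fin i)) (j : Fin k) :
    shuffle x (Fin.natAdd i j) =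
      x.1.1ᶜ.orderEmbOfFin (card_compl_of_card x.1.2) j.rev := by
  simp [shuffle]

theorem shuffle_image {i k : ℕ}
    (x : {S : Finset (Fin (i + k)) // S.card = i} × Equiv.Perm (Fin i)) :
    Finset.univ.image (fun j : Fin i => shuffle x (Fin.castAdd k j)) = x.1.1 := by
  apply Finset.eq_of_subset_of_card_le
  · intro y hy
    obtain ⟨j, -, rfl⟩ := Finset.mem_image.1 hy
    rw [shuffle_castAdd]
    exact Finset.orderEmbOfFin_mem _ _ _
  · rw [Finset.card_image_of_injective, x.1.2]
    · simp
    · intro a b h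
      exact Fin.castAdd_injective _ _ ((shuffle x).injective h)

theorem shuffle_injective {i k : ℕ} : Function.Injective (shuffle (i := i) (k := k)) := by
  rintro ⟨⟨S, hS⟩, σ⟩ ⟨⟨T, hT⟩, τ⟩ h
  have h1 := shuffle_image (⟨⟨S, hS⟩, σ⟩ : _ × _)
  rw [h, shuffle_image] at h1
  dsimp only at h1
  subst h1
  congr 1
  ext1 j
  have h2 := shuffle_castAdd (⟨⟨T, hS⟩, σ⟩ : _ × _) j
  rw [h, shuffle_castAdd] at h2
  exact ((Finset.orderEmbOfFin T hS).injective h2).symm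

theorem shuffle_mem_Des_of_lt {i k : ℕ}
    (x : {S : Finset (Fin (i + k)) // S.card = i} × Equiv.Perm (Fin i)) {j : ℕ} (hj : j < i) :
    j ∈ Des (shuffle x) ↔ j ∈ Des x.2 := by
  have e (a : ℕ) (h : a < i) : shuffle x ⟨a, by omega⟩ =
      x.1.1.orderEmbOfFin x.1.2 (x.2 ⟨a, h⟩) := shuffle_castAdd x ⟨a, h⟩
  rw [mem_Des, mem_Des]
  constructor
  · rintro ⟨h1, h2, h3⟩
    rw [e j hj, e (j - 1) (by omega), OrderEmbedding.lt_iff_lt] at h3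
    exact ⟨h1, hj, h3⟩
  · rintro ⟨h1, h2, h3⟩
    refine ⟨h1, by omega, ?_⟩
    rw [e j hj, e (j - 1) (by omega), OrderEmbedding.lt_iff_lt]
    exact h3

theorem shuffle_mem_Des_of_gt {i k : ℕ}
    (x : {S : Finset (Fin (i + k)) // S.card = i} × Equiv.Perm (Fin i)) {j : ℕ}
    (hj : i < j) (hjk : j < i + k) : j ∈ Des (shuffle x) := by
  rw [mem_Des]
  refine ⟨by omega, hjk, ?_⟩
  have e (a : ℕ) (h : a < k) : shuffle x ⟨i + a, by omega⟩ =
      x.1.1ᶜ.orderEmbOfFin (card_compl_of_card x.1.2) (Fin.rev ⟨a, h⟩) := shuffle_natAdd x ⟨a, h⟩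
  obtain ⟨d, rfl⟩ : ∃ d, j = i + (d + 1) := ⟨j - i - 1, by omega⟩
  simp only [show i + (d + 1) - 1 = i + d by omega]
  rw [e d (by omega), e (d + 1) (by omega), OrderEmbedding.lt_iff_lt, Fin.rev_lt_rev]
  simp [Fin.lt_def]

/-- Every permutation that decreases on its last `k` positions is a `shuffle`: `S` is the set of
its first `i` values, and the decreasing enumeration of `Sᶜ` is unique. -/
theorem exists_shuffle {i k : ℕ} (f : Equiv.Perm (Fin (i + k)))
    (hf : ∀ j, i < j → j < i + k → j ∈ Des f) : ∃ x, shuffle (i := i) (k := k) x = f := by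
  classical
  set S : Finset (Fin (i + k)) := Finset.univ.image (fun j : Fin i => f (Fin.castAdd k j)) with hSdef
  have hS : S.card = i := by
    rw [hSdef, Finset.card_image_of_injective]
    · simp
    · intro a b h
      exact Fin.castAdd_injective _ _ (f.injective h)
  have hmem (j : Fin i) : f (Fin.castAdd k j) ∈ S := Finset.mem_image_of_mem _ (Finset.mem_univ j)
  let g : Fin i → Fin i := fun j => (S.orderIsoOfFin hS).symm ⟨f (Fin.castAdd k j), hmem j⟩
  have hg : Function.Injective g := by
    intro a b h
    have := (S.orderIsoOfFin hS).symm.injective h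
    exact Fin.castAdd_injective _ _ (f.injective (Subtype.ext_iff.1 this))
  refine ⟨⟨⟨S, hS⟩, Equiv.ofBijective g (Finite.injective_iff_bijective.1 hg)⟩, ?_⟩
  have hanti : StrictAnti (fun j : Fin k => f (Fin.natAdd i j)) := by
    cases k with
    | zero => intro a; exact a.elim0
    | succ k =>
      rw [Fin.strictAnti_iff_succ_lt]
      intro a
      obtain ⟨_, h2, h3⟩ := (mem_Des f _).1 (hf (i + (a + 1)) (by omega) (by omega))
      exact h3
  have htail : (fun j : Fin k => f (Fin.natAdd i j.rev)) =
      Sᶜ.orderEmbOfFin (card_compl_of_card hS) := by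
    apply Finset.orderEmbOfFin_unique
    · intro j
      rw [Finset.mem_compl]
      intro h
      obtain ⟨a, -, ha⟩ := Finset.mem_image.1 h
      have := congrArg Fin.val (f.injective ha)
      simp only [Fin.val_castAdd, Fin.val_natAdd] at this
      omega
    · intro a b hab
      exact hanti (Fin.rev_lt_rev.2 hab)
  ext1 y
  induction y using Fin.addCases with
  | left j =>
    rw [shuffle_castAdd]
    simp only [Equiv.ofBijective_apply, g]
    rw [← Finset.coe_orderIsoOfFin_apply]
    simp
  | right j =>
    rw [shuffle_natAdd]
    have := congrFun htail j.rev
    simp only [Fin.rev_rev] at this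
    exact this.symm

/-! ### Counting pairs by their common descent set -/

open Classical in
/-- The number of pairs of permutations whose common descents are all `≥ i` and include every
position in `[i+1, n-1]`. -/
noncomputable def tailCount (n i : ℕ) : ℕ :=
  (Finset.univ.filter fun p : Equiv.Perm (Fin n) × Equiv.Perm (Fin n) =>
    (∀ j ∈ Des p.1 ∩ Des p.2, i ≤ j) ∧ Finset.Ico (i + 1) n ⊆ Des p.1 ∩ Des p.2).card

open Classical in
/-- The number of pairs of permutations whose set of common descents is exactly `[i, n-1]`;
the clause `i ≤ n` makes this `0` at `i = n + 1`. -/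
noncomputable def exactCount (n i : ℕ) : ℕ :=
  (Finset.univ.filter fun p : Equiv.Perm (Fin n) × Equiv.Perm (Fin n) =>
    i ≤ n ∧ Des p.1 ∩ Des p.2 = Finset.Ico i n).card

/-- A pair counted by `tailCount` is a pair of shuffles, given by two `i`-subsets and a pair of
permutations of `Fin i` without common descent. -/
theorem tailCount_eq (i k : ℕ) :
    tailCount (i + k) i = ((i + k).choose i) ^ 2 * c i := by
  classical
  let X := {S : Finset (Fin (i + k)) // S.card = i}
  let P := {p : Equiv.Perm (Fin i) × Equiv.Perm (Fin i) // Des p.1 ∩ Des p.2 = ∅}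
  have hX : Fintype.card X = (i + k).choose i := by
    simp [X]
  have hP : Fintype.card P = c i := by
    rw [c, Nat.card_eq_fintype_card]
  have h : Fintype.card ((X × X) × P) = tailCount (i + k) i := by
    rw [tailCount, ← Finset.card_univ]
    apply Finset.card_nbij
      (fun z => (shuffle (z.1.1, z.2.1.1), shuffle (z.1.2, z.2.1.2)))
    · rintro ⟨⟨S, T⟩, ⟨⟨σ, τ⟩, hστ⟩⟩ -
      simp only [Finset.coe_filter, Set.mem_ofPred_eq, Finset.mem_univ, true_and]
      constructor
      · intro j hj
        by_contra hlt
        rw [Finset.mem_inter, shuffle_mem_Des_of_lt _ (by omega),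
          shuffle_mem_Des_of_lt _ (by omega), ← Finset.mem_inter] at hj
        dsimp only at hj hστ
        rw [hστ] at hj
        simp at hj
      · intro j hj
        rw [Finset.mem_Ico] at hj
        exact Finset.mem_inter.2 ⟨shuffle_mem_Des_of_gt _ (by omega) hj.2,
          shuffle_mem_Des_of_gt _ (by omega) hj.2⟩
    · rintro ⟨⟨S, T⟩, ⟨⟨σ, τ⟩, hστ⟩⟩ - ⟨⟨S', T'⟩, ⟨⟨σ', τ'⟩, hστ'⟩⟩ - h
      simp only [Prod.mk.injEq] at h
      have h1 := shuffle_injective h.1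
      have h2 := shuffle_injective h.2
      simp only [Prod.mk.injEq] at h1 h2
      obtain ⟨rfl, rfl⟩ := h1
      obtain ⟨rfl, rfl⟩ := h2
      rfl
    · rintro ⟨f, g⟩ hfg
      simp only [Finset.coe_filter, Set.mem_ofPred_eq, Finset.mem_univ, true_and] at hfg
      obtain ⟨hlow, hhigh⟩ := hfg
      have hmem (j : ℕ) (h1 : i < j) (h2 : j < i + k) : j ∈ Des f ∧ j ∈ Des g :=
        Finset.mem_inter.1 (hhigh (Finset.mem_Ico.2 ⟨h1, h2⟩))
      obtain ⟨⟨S, σ⟩, rfl⟩ := exists_shuffle f (fun j h1 h2 => (hmem j h1 h2).1)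
      obtain ⟨⟨T, τ⟩, rfl⟩ := exists_shuffle g (fun j h1 h2 => (hmem j h1 h2).2)
      refine ⟨((S, T), ⟨(σ, τ), ?_⟩), by simp, rfl⟩
      rw [Finset.eq_empty_iff_forall_notMem]
      intro j hj
      rw [Finset.mem_inter] at hj
      obtain ⟨_, hji, _⟩ := (mem_Des σ j).1 hj.1
      have := hlow j (Finset.mem_inter.2
        ⟨(shuffle_mem_Des_of_lt _ hji).2 hj.1, (shuffle_mem_Des_of_lt _ hji).2 hj.2⟩)
      omega
  rw [← h, Fintype.card_prod, Fintype.card_prod, hX, hP]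
  ring

/-- Splitting on whether `i` is a common descent. At `i = n` the two alternatives `[i, n-1]` and
`[i+1, n-1]` are both empty, and only `exactCount n n` counts the pairs. -/
theorem tailCount_split {n i : ℕ} (hi : i ≤ n) :
    tailCount n i = exactCount n i + exactCount n (i + 1) := by
  classical
  rw [tailCount, exactCount, exactCount, ← Finset.card_union_of_disjoint]
  · congr 1
    ext ⟨f, g⟩
    simp only [Finset.mem_filter, Finset.mem_univ, true_and, Finset.mem_union]
    have hD : ∀ j ∈ Des f ∩ Des g, 1 ≤ j ∧ j < n := by
      intro j hj
      obtain ⟨h1, h2, _⟩ := (mem_Des f j).1 (Finset.mem_inter.1 hj).1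
      exact ⟨h1, h2⟩
    generalize Des f ∩ Des g = D at hD
    constructor
    · rintro ⟨h1, h2⟩
      by_cases hiD : i ∈ D
      · left
        refine ⟨hi, Finset.Subset.antisymm (fun j hj => ?_) (fun j hj => ?_)⟩
        · exact Finset.mem_Ico.2 ⟨h1 j hj, (hD j hj).2⟩
        · rw [Finset.mem_Ico] at hj
          rcases hj.1.eq_or_lt with rfl | h
          · exact hiD
          · exact h2 (Finset.mem_Ico.2 ⟨h, hj.2⟩)
      · have hIco : D = Finset.Ico (i + 1) n := by
          refine Finset.Subset.antisymm (fun j hj => ?_) h2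
          have : j ≠ i := by rintro rfl; exact hiD hj
          exact Finset.mem_Ico.2 ⟨by have := h1 j hj; omega, (hD j hj).2⟩
        rcases hi.eq_or_lt with rfl | h
        · left
          refine ⟨le_rfl, ?_⟩
          rw [hIco]; simp
        · exact Or.inr ⟨h, hIco⟩
    · rintro (⟨_, rfl⟩ | ⟨_, rfl⟩)
      · exact ⟨fun j hj => (Finset.mem_Ico.1 hj).1,
          Finset.Ico_subset_Ico_left (by omega)⟩
      · exact ⟨fun j hj => by have := (Finset.mem_Ico.1 hj).1; omega, subset_rfl⟩
  · rw [Finset.disjoint_filter]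
    rintro p - ⟨_, h1⟩ ⟨h2, h3⟩
    have : i ∈ Finset.Ico (i + 1) n := by
      rw [← h3, h1]; exact Finset.mem_Ico.2 ⟨le_rfl, h2⟩
    simp at this

theorem exactCount_zero {n : ℕ} (hn : 1 ≤ n) : exactCount n 0 = 0 := by
  classical
  rw [exactCount, Finset.card_eq_zero, Finset.filter_eq_empty_iff]
  rintro ⟨f, g⟩ - ⟨_, h⟩
  have h0 : 0 ∈ Des f ∩ Des g := by rw [h]; exact Finset.mem_Ico.2 ⟨le_rfl, hn⟩
  have := ((mem_Des f 0).1 (Finset.mem_inter.1 h0).1).1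
  omega

theorem exactCount_succ_self (n : ℕ) : exactCount n (n + 1) = 0 := by
  simp [exactCount]

/-! ### The recursion -/

theorem sum_alternating_telescope (e : ℕ → ℤ) (m : ℕ) :
    ∑ i ∈ Finset.range m, (-1 : ℤ) ^ i * (e i + e (i + 1)) = e 0 - (-1) ^ m * e m := by
  induction m with
  | zero => simp
  | succ m ih => rw [Finset.sum_range_succ, ih]; ring

theorem no_common_descent_recursion :
    c 0 = 1 ∧ ∀ n : ℕ, 1 ≤ n →
      (c n : ℤ) = ∑ i ∈ Finset.range n,
        (-1 : ℤ) ^ (n + i + 1) * (n.choose i : ℤ) ^ 2 * (c i : ℤ) := by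
  constructor
  · have : ∀ p : Equiv.Perm (Fin 0) × Equiv.Perm (Fin 0), Des p.1 ∩ Des p.2 = ∅ := by
      intro p; simp [Des]
    rw [c, Nat.card_congr (Equiv.subtypeUnivEquiv this)]
    simp
  · intro n hn
    have hterm : ∀ i ∈ Finset.range (n + 1),
        (-1 : ℤ) ^ i * ((exactCount n i : ℤ) + (exactCount n (i + 1) : ℤ)) =
          (-1) ^ i * ((n.choose i : ℤ) ^ 2 * (c i : ℤ)) := by
      intro i hi
      have hi' : i ≤ n := by rw [Finset.mem_range] at hi; omega
      have h := tailCount_split hi'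
      obtain ⟨k, rfl⟩ := Nat.exists_eq_add_of_le hi'
      rw [tailCount_eq] at h
      congr 1
      exact_mod_cast h.symm
    have hsum := sum_alternating_telescope (fun i => (exactCount n i : ℤ)) (n + 1)
    rw [Finset.sum_congr rfl hterm, exactCount_zero hn, exactCount_succ_self,
      Finset.sum_range_succ] at hsum
    simp only [Nat.choose_self, Nat.cast_one, one_pow, one_mul, Nat.cast_zero, mul_zero,
      sub_zero] at hsum
    have hsq : (-1 : ℤ) ^ n * (-1) ^ n = 1 := by
      rw [← mul_pow]; simp
    have hfactor : ∑ i ∈ Finset.range n,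
        (-1 : ℤ) ^ (n + i + 1) * (n.choose i : ℤ) ^ 2 * (c i : ℤ) =
        -(-1) ^ n * ∑ i ∈ Finset.range n, (-1 : ℤ) ^ i * ((n.choose i : ℤ) ^ 2 * (c i : ℤ)) := by
      rw [Finset.mul_sum]
      refine Finset.sum_congr rfl fun i _ => ?_
      ring
    rw [hfactor]
    linear_combination (-1 : ℤ) ^ n * hsum - (c n : ℤ) * hsq
end

section
/- For every n ≥ 1, the number of pairs (f,g) of permutations of {1,…,n} satisfying Des(g⁻¹) ⊆ Des(f) equals the number of pairs (f,g) of permutations of {1,…,n} with Des(f) ∩ Des(g) = ∅ (no common descent). -/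
/-- Composing with the order-reversing permutation of the values complements the descent set
inside `{1,…,n-1}`, since consecutive values of a permutation are distinct. -/
lemma Des_revPerm_mul {n : ℕ} (f : Equiv.Perm (Fin n)) :
    Des (Fin.revPerm * f) = Finset.Ico 1 n \ Des f := by
  ext i
  simp only [Des, Finset.mem_filter, Finset.mem_sdiff, Finset.mem_Ico, Equiv.Perm.mul_apply,
    Fin.revPerm_apply, Fin.rev_lt_rev]
  constructor
  · rintro ⟨hi, h, hlt⟩
    exact ⟨hi, fun ⟨_, _, hgt⟩ => lt_asymm hlt hgt⟩
  · rintro ⟨hi, hnot⟩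
    refine ⟨hi, hi.2, lt_of_le_of_ne (not_lt.mp fun hgt => hnot ⟨hi, hi.2, hgt⟩) fun heq => ?_⟩
    have := Fin.mk.inj (f.injective heq)
    omega

/-- The number of normal pairs `(f, g)` of permutations of `{1,…,n}`,
i.e. pairs with `Des (g⁻¹) ⊆ Des f`, equals the number of pairs of permutations
with no common descent. -/
theorem card_normal_pairs_eq_card_no_common_descent (n : ℕ) (hn : 1 ≤ n) :
    Nat.card {p : Equiv.Perm (Fin n) × Equiv.Perm (Fin n) // Des p.2⁻¹ ⊆ Des p.1} =
      Nat.card {p : Equiv.Perm (Fin n) × Equiv.Perm (Fin n) // Des p.1 ∩ Des p.2 = ∅} := by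
  refine Nat.card_congr (Equiv.subtypeEquiv
    ((Equiv.mulLeft Fin.revPerm).prodCongr (Equiv.inv _)) ?_)
  rintro ⟨f, g⟩
  have hsub : Des g⁻¹ ⊆ Finset.Ico 1 n := Finset.filter_subset _ _
  simp only [Equiv.prodCongr_apply, Prod.map_apply, Equiv.coe_mulLeft, Equiv.inv_apply,
    Des_revPerm_mul, Finset.eq_empty_iff_forall_notMem, Finset.mem_inter, Finset.mem_sdiff]
  constructor
  · rintro h i ⟨⟨_, hf⟩, hg⟩
    exact hf (h hg)
  · intro h i hg
    by_contra hf
    exact h i ⟨⟨hsub hg, hf⟩, hg⟩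
end

section
/- Let n ≥ 1 and J ⊆ {1,…,n−1}, and let (q_1,…,q_ℓ) be the n-composition of J. Then the number of permutations f of {1,…,n} with Des(f) ⊇ J equals the multinomial coefficient n!/(q_1!·q_2!·⋯·q_ℓ!). -/
/-- The `n`-composition of a subset `I` of `{1,…,n-1}`: the list
`(p₁, p₂ - p₁, …, p_k - p_{k-1})` where `p₁ < p₂ < … < p_k` is the increasing
enumeration of `{1,…,n} \ I`. -/
def ncomp (n : ℕ) (I : Finset ℕ) : List ℕ :=
  let P := ((Finset.Icc 1 n) \ I).sort (· ≤ ·)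
  List.zipWith (· - ·) P (0 :: P)

/-- The pair (block of `i`, value of `f` at `i`), with values in reversed order, compared
lexicographically. -/
def lexKey {n : ℕ} (b : Fin n → ℕ) (f : Equiv.Perm (Fin n)) (i : Fin n) : ℕ ×ₗ (Fin n)ᵒᵈ :=
  toLex (b i, OrderDual.toDual (f i))

theorem lexKey_injective {n : ℕ} (b : Fin n → ℕ) (f : Equiv.Perm (Fin n)) :
    Function.Injective (lexKey b f) := by
  intro i j h
  have h2 := congrArg (fun x => OrderDual.ofDual (ofLex x).2) h
  exact f.injective h2

theorem lexKey_comp {n : ℕ} (b : Fin n → ℕ) (g h : Equiv.Perm (Fin n)) (hb : b ∘ h = b) :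
    lexKey b g ∘ h = lexKey b (g * h) := by
  funext i
  have := congrFun hb i
  simp only [Function.comp_apply] at this
  simp [lexKey, this]

/-- Each permutation is uniquely `f * h⁻¹` with `f` decreasing on the level sets of `b` and `h`
preserving them: `h` is the permutation sorting `lexKey b g`. -/
theorem card_strictMono_mul_card_stabilizer {n : ℕ} (b : Fin n → ℕ) (hb : Monotone b) :
    Nat.card {f : Equiv.Perm (Fin n) // StrictMono (lexKey b f)} *
      Nat.card {h : Equiv.Perm (Fin n) // b ∘ h = b} = n.factorial := by
  rw [← Nat.card_prod]
  have hcard : Nat.card (Equiv.Perm (Fin n)) = n.factorial := by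
    rw [Nat.card_eq_fintype_card, Fintype.card_perm, Fintype.card_fin]
  rw [← hcard]
  refine Nat.card_eq_of_bijective (fun x => x.1.1 * x.2.1⁻¹) ⟨?_, ?_⟩
  · rintro ⟨⟨f, hf⟩, ⟨h, hh⟩⟩ ⟨⟨f', hf'⟩, ⟨h', hh'⟩⟩ heq
    simp only at heq
    have e1 : lexKey b (f * h⁻¹) ∘ h = lexKey b f := by
      rw [lexKey_comp b _ h hh, inv_mul_cancel_right]
    have e2 : lexKey b (f * h⁻¹) ∘ h' = lexKey b f' := by
      rw [heq, lexKey_comp b _ h' hh', inv_mul_cancel_right]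
    have e3 := Tuple.unique_monotone (e1 ▸ hf.monotone) (e2 ▸ hf'.monotone)
    have e4 : h = h' :=
      Equiv.ext fun i => lexKey_injective b (f * h⁻¹) (congrFun e3 i)
    subst e4
    have e5 : f = f' := mul_right_cancel heq
    subst e5
    rfl
  · intro g
    set h := Tuple.sort (lexKey b g) with hdef
    have hm : Monotone (lexKey b g ∘ h) := Tuple.monotone_sort _
    have hbh : b ∘ h = b := by
      have h1 : Monotone (b ∘ h) := fun i j hij => by
        have := Prod.Lex.monotone_fst _ _ (hm hij)
        simpa [lexKey] using this
      -- both `b ∘ h` and `b ∘ 1` are sorted rearrangements of `b`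
      exact Tuple.unique_monotone (τ := 1) h1 hb
    refine ⟨⟨⟨g * h, ?_⟩, ⟨h, hbh⟩⟩, by simp⟩
    rw [← lexKey_comp b g h hbh]
    exact hm.strictMono_of_injective ((lexKey_injective b g).comp h.injective)

/-- The number of the block containing the (0-based) index `a`: the number of block ends `p ∉ J`,
`1 ≤ p ≤ n`, with `p ≤ a`. -/
def blockIdx (n : ℕ) (J : Finset ℕ) (a : ℕ) : ℕ :=
  ((Finset.Icc 1 n \ J).filter (· ≤ a)).card

theorem blockIdx_mono (n : ℕ) (J : Finset ℕ) : Monotone (blockIdx n J) := by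
  intro a c hac
  refine Finset.card_le_card fun p hp => ?_
  simp only [Finset.mem_filter] at hp ⊢
  exact ⟨hp.1, hp.2.trans hac⟩

theorem blockIdx_succ_of_mem {n : ℕ} {J : Finset ℕ} {a : ℕ} (h : a + 1 ∈ J) :
    blockIdx n J (a + 1) = blockIdx n J a := by
  unfold blockIdx
  congr 1
  ext p
  simp only [Finset.mem_filter, Finset.mem_sdiff, Finset.mem_Icc]
  constructor
  · rintro ⟨⟨h1, h2⟩, h3⟩
    have : p ≠ a + 1 := fun e => h2 (e ▸ h)
    exact ⟨⟨h1, h2⟩, by omega⟩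
  · rintro ⟨h1, h2⟩
    exact ⟨h1, by omega⟩

theorem blockIdx_lt_succ_of_notMem {n : ℕ} {J : Finset ℕ} {a : ℕ} (ha : a + 1 ≤ n)
    (h : a + 1 ∉ J) : blockIdx n J a < blockIdx n J (a + 1) := by
  refine Finset.card_lt_card (Finset.ssubset_iff_subset_ne.2 ⟨fun p hp => ?_, fun e => ?_⟩)
  · simp only [Finset.mem_filter] at hp ⊢
    exact ⟨hp.1, by omega⟩
  · have : a + 1 ∈ (Finset.Icc 1 n \ J).filter (· ≤ a) := by
      rw [e]
      simp [h, ha]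
    simp at this

theorem subset_des_iff {n : ℕ} {J : Finset ℕ} (hJ : J ⊆ Finset.Icc 1 (n - 1))
    (f : Equiv.Perm (Fin n)) :
    J ⊆ Des f ↔ StrictMono (lexKey (fun i => blockIdx n J i) f) := by
  obtain _ | m := n
  · exact ⟨fun _ i => i.elim0, fun _ j hj => absurd (hJ hj) (by simp)⟩
  rw [Fin.strictMono_iff_lt_succ]
  simp only [lexKey, Prod.Lex.toLex_lt_toLex, OrderDual.toDual_lt_toDual, Fin.val_castSucc,
    Fin.val_succ]
  constructor
  · intro h i
    by_cases hi : (i : ℕ) + 1 ∈ J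
    · right
      obtain ⟨_, h2⟩ := (Finset.mem_filter.1 (h hi)).2
      exact ⟨(blockIdx_succ_of_mem hi).symm, h2⟩
    · left
      exact blockIdx_lt_succ_of_notMem (by omega) hi
  · intro h j hj
    have hj' := Finset.mem_Icc.1 (hJ hj)
    obtain ⟨i, rfl⟩ : ∃ i, j = i + 1 := ⟨j - 1, by omega⟩
    have hi : i < m := by omega
    refine Finset.mem_filter.2 ⟨Finset.mem_Ico.2 ⟨by omega, by omega⟩, by omega, ?_⟩
    rcases h ⟨i, hi⟩ with h1 | h1
    · simp only [blockIdx_succ_of_mem hj, lt_irrefl] at h1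
    · exact h1.2

theorem getElem_le_iff_lt_countP (a : ℕ) (L : List ℕ) (hL : L.Pairwise (· < ·)) (j : ℕ)
    (hj : j < L.length) : L[j] ≤ a ↔ j < L.countP (· ≤ a) := by
  induction L generalizing j with
  | nil => simp at hj
  | cons p L ih =>
    rw [List.pairwise_cons] at hL
    by_cases hp : p ≤ a
    · rw [List.countP_cons_of_pos (by simpa using hp)]
      cases j with
      | zero => simpa using hp
      | succ j =>
        have := ih hL.2 j (by simpa using hj)
        simp only [List.getElem_cons_succ]
        omega
    · have h0 : L.countP (· ≤ a) = 0 := by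
        rw [List.countP_eq_zero]
        intro q hq
        have := hL.1 q hq
        simp only [decide_eq_true_eq]
        omega
      rw [List.countP_cons_of_neg (by simpa using hp), h0]
      cases j with
      | zero => simpa using hp
      | succ j =>
        have := hL.1 _ (List.getElem_mem (l := L) (n := j) (by simpa using hj))
        simp only [List.getElem_cons_succ]
        omega

theorem blockIdx_eq_countP (n : ℕ) (J : Finset ℕ) (a : ℕ) :
    blockIdx n J a = ((Finset.Icc 1 n \ J).sort (· ≤ ·)).countP (· ≤ a) := by
  rw [← Multiset.coe_countP, Finset.sort_eq, Multiset.countP_eq_card_filter]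
  simp [blockIdx, Finset.card_def, Finset.filter_val]

/-- The `k`-th block is the interval `[p_{k-1}, p_k)` of 0-based indices (with `p_{-1} = 0`), so its
size is the `k`-th entry of the composition. -/
theorem card_block (n : ℕ) (J : Finset ℕ) (k : ℕ) (hk : k < (ncomp n J).length) :
    Fintype.card {a : Fin n // blockIdx n J a = k} = (ncomp n J)[k] := by
  set P := (Finset.Icc 1 n \ J).sort (· ≤ ·) with hP
  have hn : ncomp n J = List.zipWith (· - ·) P (0 :: P) := rfl
  have hkP : k < P.length := by
    simp only [hn, List.length_zipWith] at hk
    omega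
  have hs : P.Pairwise (· < ·) := (Finset.sortedLT_sort _).pairwise
  have hmem : P[k] ∈ Finset.Icc 1 n \ J := by
    rw [← Finset.mem_sort (· ≤ ·)]
    exact List.getElem_mem _
  have hle : P[k] ≤ n := by
    simp only [Finset.mem_sdiff, Finset.mem_Icc] at hmem
    exact hmem.1.2
  have key : ∀ a : ℕ, blockIdx n J a = k ↔
      (0 :: P)[k]'(by simp; omega) ≤ a ∧ a < P[k] := by
    intro a
    have h1 := getElem_le_iff_lt_countP a P hs k hkP
    rw [blockIdx_eq_countP, ← hP]
    cases k with
    | zero =>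
      simp only [List.getElem_cons_zero]
      omega
    | succ k =>
      have h2 := getElem_le_iff_lt_countP a P hs k (by omega)
      simp only [List.getElem_cons_succ]
      omega
  have hc : Fintype.card {a : Fin n // blockIdx n J a = k} =
      (Finset.Ico ((0 :: P)[k]'(by simp; omega)) P[k]).card := by
    rw [Fintype.card_subtype, ← Finset.card_map Fin.valEmbedding]
    congr 1
    ext a
    simp only [Finset.mem_map, Finset.mem_filter, Finset.mem_univ, true_and, key,
      Fin.valEmbedding_apply, Finset.mem_Ico]
    constructor
    · rintro ⟨i, hi, rfl⟩
      exact hi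
    · intro h
      exact ⟨⟨a, by omega⟩, h, rfl⟩
  rw [hc, Nat.card_Ico]
  simp only [hn, List.getElem_zipWith]

theorem blockIdx_lt_length {n : ℕ} (hn : 1 ≤ n) {J : Finset ℕ}
    (hJ : J ⊆ Finset.Icc 1 (n - 1)) (a : Fin n) : blockIdx n J a < (ncomp n J).length := by
  have hlen : (ncomp n J).length = (Finset.Icc 1 n \ J).card := by
    simp [ncomp]
  rw [hlen]
  -- `n` itself is always a block end, and it exceeds every index
  refine Finset.card_lt_card (Finset.filter_ssubset.2 ⟨n, ?_, by simp⟩)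
  simp only [Finset.mem_sdiff, Finset.mem_Icc]
  refine ⟨⟨hn, le_rfl⟩, fun h => ?_⟩
  have := Finset.mem_Icc.1 (hJ h)
  omega

theorem card_stabilizer_blockIdx {n : ℕ} (hn : 1 ≤ n) {J : Finset ℕ}
    (hJ : J ⊆ Finset.Icc 1 (n - 1)) :
    Nat.card {h : Equiv.Perm (Fin n) //
      (fun i : Fin n => blockIdx n J i) ∘ h = fun i : Fin n => blockIdx n J i} =
      ((ncomp n J).map Nat.factorial).prod := by
  let b : Fin n → Fin (ncomp n J).length := fun i => ⟨blockIdx n J i, blockIdx_lt_length hn hJ i⟩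
  have e : ∀ h : Equiv.Perm (Fin n), ((fun i : Fin n => blockIdx n J i) ∘ h =
      fun i : Fin n => blockIdx n J i) ↔ b ∘ h = b := by
    intro h
    simp only [funext_iff, Function.comp_apply, b, Fin.mk.injEq]
  rw [Nat.card_congr (Equiv.subtypeEquivRight e), Nat.card_eq_fintype_card,
    DomMulAct.stabilizer_card, ← Fin.prod_univ_fun_getElem]
  refine Finset.prod_congr rfl fun k _ => ?_
  rw [← card_block n J k k.2]
  simp only [b, Fin.ext_iff]

/-- The number of permutations of `{1,…,n}` whose descent set contains `J` is the
multinomial coefficient `n! / (q₁! ⋯ q_ℓ!)`, where `(q₁,…,q_ℓ)` is the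
`n`-composition of `J`. -/
theorem card_descents_superset (n : ℕ) (hn : 1 ≤ n) (J : Finset ℕ)
    (hJ : J ⊆ Finset.Icc 1 (n - 1)) :
    Nat.card {f : Equiv.Perm (Fin n) // J ⊆ Des f} =
      n.factorial / ((ncomp n J).map Nat.factorial).prod := by
  have h1 := card_strictMono_mul_card_stabilizer (fun i : Fin n => blockIdx n J i)
    (fun i j hij => blockIdx_mono n J hij)
  rw [card_stabilizer_blockIdx hn hJ] at h1
  rw [Nat.card_congr (Equiv.subtypeEquivRight (subset_des_iff hJ)), ← h1]
  refine (Nat.mul_div_cancel _ (List.prod_pos ?_)).symm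
  intro x hx
  obtain ⟨q, _, rfl⟩ := List.mem_map.1 hx
  exact q.factorial_pos
end

section
/- Let n ≥ 1 and let I, J ⊆ {1,…,n−1} have n-compositions (p_1,…,p_k) and (q_1,…,q_ℓ) respectively. Then the number of permutations f of {1,…,n} satisfying Des(f⁻¹) ⊇ I and Des(f) ⊇ J equals the number of k×ℓ matrices with non-negative integer entries whose i-th row sums to p_i for every i and whose j-th column sums to q_j for every j. -/
open Finset

/-- A monotone map on `Fin n` is determined by the sizes of its fibres. -/
theorem monotone_unique {n : ℕ} {K : Type*} [LinearOrder K] {u v : Fin n → K}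
    (hu : Monotone u) (hv : Monotone v)
    (h : ∀ a, #{x | u x = a} = #{x | v x = a}) : u = v := by
  have key : ∀ {u v : Fin n → K}, Monotone u → Monotone v →
      (∀ a, #{x | u x = a} = #{x | v x = a}) → ∀ x, ¬ u x < v x := by
    intro u v hu hv h x hx
    -- `#{y | u y ≤ u x}` exceeds `x`, while `#{y | v y ≤ u x}` is at most `x`
    have cnt : #{y | u y ≤ u x} = #{y | v y ≤ u x} := by
      let S : Finset K := (univ.image u ∪ univ.image v).filter (· ≤ u x)
      rw [card_eq_sum_card_fiberwise (f := u) (t := S), card_eq_sum_card_fiberwise (f := v) (t := S)]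
      · refine sum_congr rfl fun a ha => ?_
        have ha' : a ≤ u x := (mem_filter.1 ha).2
        convert h a using 2 <;> ext y <;> simp <;> rintro rfl <;> exact ha'
      · intro y hy; simp [S] at hy ⊢; exact hy
      · intro y hy; simp [S] at hy ⊢; exact hy
    have h1 : #(Iic x) ≤ #{y | u y ≤ u x} :=
      card_le_card fun y hy => by simpa using hu (mem_Iic.1 hy)
    have h2 : #{y | v y ≤ u x} ≤ #(Iio x) := card_le_card fun y hy => by
      simp only [mem_filter, mem_univ, true_and] at hy
      rw [mem_Iio]
      by_contra hxy
      exact absurd ((hv (not_lt.1 hxy)).trans hy) (not_le.2 hx)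
    simp at h1 h2
    omega
  funext x
  exact le_antisymm (not_lt.1 (key hv hu (fun a => (h a).symm) x)) (not_lt.1 (key hu hv h x))

/-- Any map with the prescribed fibre sizes becomes monotone after sorting. -/
theorem exists_monotone {n : ℕ} {K : Type*} [LinearOrder K] [Fintype K] (m : K → ℕ)
    (hm : ∑ a, m a = n) : ∃ u : Fin n → K, Monotone u ∧ ∀ a, #{x | u x = a} = m a := by
  let e : (Σ a, Fin (m a)) ≃ Fin n := Fintype.equivFinOfCardEq (by simp [hm])
  let u : Fin n → K := fun x => (e.symm x).1
  refine ⟨u ∘ Tuple.sort u, Tuple.monotone_sort u, fun a => ?_⟩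
  have e2 : {x // (u ∘ Tuple.sort u) x = a} ≃ Fin (m a) :=
    (((Tuple.sort u).trans e.symm).subtypeEquiv (q := fun s => s.1 = a) (fun x => Iff.rfl)).trans
      (Equiv.sigmaSubtype a)
  rw [← Fintype.card_subtype, Fintype.card_congr e2, Fintype.card_fin]

/-- The number of positions in the `j`-th block of `c` carrying a value in the `i`-th block of
`r`. -/
def cellCount {n k l : ℕ} (r : Fin n → Fin k) (c : Fin n → Fin l) (f : Equiv.Perm (Fin n))
    (i : Fin k) (j : Fin l) : ℕ :=
  #{x | c x = j ∧ r (f x) = i}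

/-- `f` is strictly decreasing on every fibre of `c`. -/
def DecOn {n l : ℕ} (c : Fin n → Fin l) (f : Equiv.Perm (Fin n)) : Prop :=
  ∀ x y, x < y → c x = c y → f y < f x

/-- Lexicographic pair of `a` and `b`, with the order of the second factor reversed. -/
abbrev key {α β : Type*} (a : α) (b : β) : α ×ₗ βᵒᵈ := toLex (a, OrderDual.toDual b)

theorem key_lt {α β : Type*} [LinearOrder α] [LinearOrder β] {a a' : α} {b b' : β} :
    key a b < key a' b' ↔ a < a' ∨ a = a' ∧ b' < b := by
  simp [key, Prod.Lex.toLex_lt_toLex]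

theorem key_le {α β : Type*} [LinearOrder α] [LinearOrder β] {a a' : α} {b b' : β} :
    key a b ≤ key a' b' ↔ a < a' ∨ a = a' ∧ b' ≤ b := by
  simp [key, Prod.Lex.toLex_le_toLex]

theorem key_inj {α β : Type*} {a a' : α} {b b' : β} :
    key a b = key a' b' ↔ a = a' ∧ b = b' := by
  simp [key]

section Abstract

variable {n k l : ℕ} {r : Fin n → Fin k} {c : Fin n → Fin l}

theorem sum_cellCount_row (f : Equiv.Perm (Fin n)) (i : Fin k) :
    ∑ j, cellCount r c f i j = #{y | r y = i} := by
  have h1 : #{x | r (f x) = i} = #{y | r y = i} :=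
    card_bij (fun x _ => f x) (by simp) (by simp) (fun y hy => ⟨f.symm y, by simpa using hy⟩)
  rw [← h1, card_eq_sum_card_fiberwise (f := c) (t := univ) (by simp)]
  refine sum_congr rfl fun j _ => ?_
  rw [cellCount, filter_filter]
  simp only [and_comm]

theorem sum_cellCount_col (f : Equiv.Perm (Fin n)) (j : Fin l) :
    ∑ i, cellCount r c f i j = #{x | c x = j} := by
  rw [card_eq_sum_card_fiberwise (f := fun x => r (f x)) (t := univ) (by simp)]
  refine sum_congr rfl fun i _ => ?_
  rw [cellCount, filter_filter]

/-- The matrix determines the word `r ∘ f`, and the word determines `f`. -/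
theorem cellCount_injOn (hr : Monotone r) (hc : Monotone c) {f g : Equiv.Perm (Fin n)}
    (hf : DecOn r f⁻¹) (hf' : DecOn c f) (hg : DecOn r g⁻¹) (hg' : DecOn c g)
    (h : cellCount r c f = cellCount r c g) : f = g := by
  have mono : ∀ {f : Equiv.Perm (Fin n)}, DecOn c f → Monotone fun x => key (c x) (r (f x)) := by
    intro f hf x y hxy
    rcases hxy.eq_or_lt with rfl | hlt
    · exact le_rfl
    rw [key_le]
    rcases (hc hxy).lt_or_eq with h | h
    · exact Or.inl h
    · exact Or.inr ⟨h, hr (hf x y hlt h).le⟩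
  have fib : ∀ (f : Equiv.Perm (Fin n)) a, #{x | key (c x) (r (f x)) = a} =
      cellCount r c f (OrderDual.ofDual (ofLex a).2) (ofLex a).1 := by
    intro f a
    rw [cellCount]
    congr 1
    ext x
    simp only [mem_filter, mem_univ, true_and]
    exact key_inj (b' := OrderDual.ofDual (ofLex a).2) (a' := (ofLex a).1)
  have hw : (fun x => key (c x) (r (f x))) = fun x => key (c x) (r (g x)) := by
    refine monotone_unique (mono hf') (mono hg') fun a => ?_
    rw [fib, fib, h]
  have hw' : ∀ x, r (f x) = r (g x) := fun x => (key_inj.1 (congrFun hw x)).2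
  -- both `f⁻¹` and `g⁻¹` sort the injective keys `(r (f x), x)`
  have sorts : ∀ {f : Equiv.Perm (Fin n)}, DecOn r f⁻¹ →
      Monotone ((fun x => key (r (f x)) x) ∘ (f⁻¹ : Equiv.Perm (Fin n))) := by
    intro f hf y y' hy
    rcases hy.eq_or_lt with rfl | hlt
    · exact le_rfl
    simp only [Function.comp, key_le, Equiv.Perm.inv_def, Equiv.apply_symm_apply]
    rcases (hr hy).lt_or_eq with h | h
    · exact Or.inl h
    · exact Or.inr ⟨h, (hf y y' hlt h).le⟩
  have s1 := sorts hf
  have s2 := sorts hg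
  simp only [← hw'] at s2
  have := Tuple.unique_monotone s1 s2
  refine inv_injective (Equiv.ext fun y => ?_)
  exact (key_inj.1 (congrFun this y)).2

/-- The permutation is `σ⁻¹`, where `σ` sorts the keys `(w x, x)` of the word `w` read off `A`. -/
theorem cellCount_surjOn (hr : Monotone r) (hc : Monotone c) (A : Fin k → Fin l → ℕ)
    (hrow : ∀ i, ∑ j, A i j = #{y | r y = i}) (hcol : ∀ j, ∑ i, A i j = #{x | c x = j}) :
    ∃ f : Equiv.Perm (Fin n), DecOn r f⁻¹ ∧ DecOn c f ∧ cellCount r c f = A := by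
  obtain ⟨u, hu, hcard⟩ := exists_monotone (n := n) (K := Fin l ×ₗ (Fin k)ᵒᵈ)
    (fun a => A (OrderDual.ofDual (ofLex a).2) (ofLex a).1) (by
      rw [← (toLex (α := Fin l × (Fin k)ᵒᵈ)).sum_comp, Fintype.sum_prod_type]
      simp only [ofLex_toLex]
      have : ∀ j, ∑ b : (Fin k)ᵒᵈ, A (OrderDual.ofDual b) j = #{x | c x = j} := fun j => by
        rw [← hcol j, ← (OrderDual.toDual (α := Fin k)).sum_comp]; simp
      simp only [this]
      rw [← card_eq_sum_card_fiberwise (by simp)]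
      simp)
  let w : Fin n → Fin k := fun x => OrderDual.ofDual (ofLex (u x)).2
  have cell : ∀ i j, #{x | (ofLex (u x)).1 = j ∧ w x = i} = A i j := fun i j => by
    have := hcard (key j i)
    simp only [key, ofLex_toLex, OrderDual.ofDual_toDual] at this
    rw [← this]
    congr 1
    ext x
    simp only [mem_filter, mem_univ, true_and, w]
    constructor
    · rintro ⟨rfl, rfl⟩; simp
    · intro h; simp [h]
  -- the first component of `u` is `c`, being monotone with the same fibre sizes
  have huc : (fun x => (ofLex (u x)).1) = c := by
    refine monotone_unique (fun x y hxy => ?_) hc fun j => ?_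
    · rcases Prod.Lex.le_iff.1 (hu hxy) with h | h
      · exact h.le
      · exact h.1.le
    · rw [← hcol j, card_eq_sum_card_fiberwise (f := w) (t := univ) (by simp)]
      refine sum_congr rfl fun i _ => ?_
      rw [filter_filter, cell]
  have huc' : ∀ x, (ofLex (u x)).1 = c x := congrFun huc
  simp only [huc'] at cell
  let h : Fin n → Fin k ×ₗ (Fin n)ᵒᵈ := fun x => key (w x) x
  have hinj : Function.Injective h := fun x y hxy => (key_inj.1 hxy).2
  let σ := Tuple.sort h
  have hσ : StrictMono (h ∘ σ) :=
    (Tuple.monotone_sort h).strictMono_of_injective (hinj.comp σ.injective)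
  have hwr : w ∘ σ = r := by
    refine monotone_unique (fun x y hxy => ?_) hr fun i => ?_
    · rcases key_le.1 (hσ.monotone hxy) with h | h
      · exact h.le
      · exact h.1.le
    · have h1 : #{x | (w ∘ σ) x = i} = #{y | w y = i} :=
        card_bij (fun x _ => σ x) (by simp) (by simp)
          (fun y hy => ⟨σ.symm y, by simpa using hy⟩)
      rw [h1, ← hrow i, card_eq_sum_card_fiberwise (f := c) (t := univ) (by simp)]
      refine sum_congr rfl fun j _ => ?_
      rw [filter_filter, ← cell]
      simp only [and_comm]
  have hrw : ∀ x, r (σ⁻¹ x) = w x := fun x => by simp [← hwr]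
  refine ⟨σ⁻¹, ?_, ?_, ?_⟩
  · intro y y' hy hryy
    rw [inv_inv]
    rcases key_lt.1 (hσ hy) with h | h
    · rw [← hwr] at hryy
      exact absurd hryy h.ne
    · exact h.2
  · intro x y hxy hcxy
    have hwxy : w y ≤ w x := by
      rcases Prod.Lex.le_iff.1 (hu hxy.le) with h | h
      · rw [huc', huc', hcxy] at h
        exact absurd h (lt_irrefl _)
      · exact h.2
    have : h y < h x := key_lt.2 (hwxy.lt_or_eq.imp id fun e => ⟨e, hxy⟩)
    refine hσ.lt_iff_lt.1 ?_
    simpa using this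
  · funext i j
    rw [← cell, cellCount]
    simp only [hrw]

theorem card_decOn_eq (hr : Monotone r) (hc : Monotone c) :
    Nat.card {f : Equiv.Perm (Fin n) // DecOn r f⁻¹ ∧ DecOn c f} =
      Nat.card {A : Fin k → Fin l → ℕ //
        (∀ i, ∑ j, A i j = #{y | r y = i}) ∧ (∀ j, ∑ i, A i j = #{x | c x = j})} := by
  refine Nat.card_eq_of_bijective
    (fun f => ⟨cellCount r c f.1, sum_cellCount_row f.1, sum_cellCount_col f.1⟩) ⟨?_, ?_⟩
  · intro f g h
    exact Subtype.ext
      (cellCount_injOn hr hc f.2.1 f.2.2 g.2.1 g.2.2 (congrArg Subtype.val h))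
  · rintro ⟨A, hrow, hcol⟩
    obtain ⟨f, h1, h2, h3⟩ := cellCount_surjOn hr hc A hrow hcol
    exact ⟨⟨f, h1, h2⟩, Subtype.ext h3⟩

end Abstract

/-- For `Q = {1,…,n} \ J`, the 0-based position `x` lies in the block of index
`#{p ∈ Q | p ≤ x}`. -/
theorem exists_block (n : ℕ) (hn : 1 ≤ n) (J : Finset ℕ) (hJ : J ⊆ Icc 1 (n - 1)) :
    ∃ c : Fin n → Fin (ncomp n J).length, Monotone c ∧
      (∀ j, #{x | c x = j} = (ncomp n J).get j) ∧
      ∀ f : Equiv.Perm (Fin n), J ⊆ Des f ↔ DecOn c f := by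
  set Q : Finset ℕ := Icc 1 n \ J with hQ
  have hfin : (Set.ofPred (· ∈ Q)).Finite := Q.finite_toSet
  have hfinQ : hfin.toFinset = Q := by ext; simp [Set.ofPred]
  have hlen : (ncomp n J).length = #Q := by simp [ncomp, hQ]
  have hnQ : n ∈ Q := by
    simp only [hQ, mem_sdiff, mem_Icc]
    refine ⟨⟨hn, le_rfl⟩, fun h => ?_⟩
    have := mem_Icc.1 (hJ h)
    omega
  have hQ1 : ∀ q ∈ Q, 1 ≤ q ∧ q ≤ n := fun q hq => mem_Icc.1 (mem_sdiff.1 hq).1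
  have hcount : ∀ x : Fin n, Nat.count (· ∈ Q) (x + 1) < (ncomp n J).length := fun x => by
    have := Nat.count_lt_card hfin hnQ
    rw [hfinQ] at this
    rw [hlen]
    exact (Nat.count_monotone _ x.2).trans_lt this
  let c : Fin n → Fin (ncomp n J).length := fun x => ⟨_, hcount x⟩
  have hmono : Monotone c := fun x y hxy =>
    Nat.count_monotone _ (Nat.succ_le_succ hxy)
  refine ⟨c, hmono, fun j => ?_, fun f => ⟨fun h => ?_, fun h => ?_⟩⟩
  · have hj : (j : ℕ) < #Q := hlen ▸ j.2
    have hnth : ∀ i (hi : i < #Q), (Q.sort (· ≤ ·))[i]'(by simpa using hi) =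
        Nat.nth (· ∈ Q) i := fun i hi => by
      rw [Nat.nth_eq_getD_sort hfin, List.getD_eq_getElem _ _ (by simpa [hfinQ] using hi)]
      simp only [hfinQ]
    have lt_iff : ∀ i < #Q, ∀ m, i < Nat.count (· ∈ Q) m ↔ Nat.nth (· ∈ Q) i < m :=
      fun i hi m => ⟨Nat.nth_lt_of_lt_count, fun h => by
        have := Nat.count_strict_mono (p := (· ∈ Q))
          (Nat.nth_mem_of_lt_card hfin (by rwa [hfinQ])) h
        rwa [Nat.count_nth_of_lt_card_finite hfin (by rwa [hfinQ])] at this⟩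
    have hle : ∀ i < #Q, Nat.nth (· ∈ Q) i ≤ n := fun i hi =>
      (hQ1 _ (Nat.nth_mem_of_lt_card hfin (by rwa [hfinQ]))).2
    -- `a` is the end of the preceding block, `0` for the first block
    obtain ⟨a, ha, hab⟩ : ∃ a, (ncomp n J).get j = Nat.nth (· ∈ Q) j - a ∧
        ∀ x, (j : ℕ) ≤ Nat.count (· ∈ Q) (x + 1) ↔ a ≤ x := by
      obtain ⟨j, hj'⟩ := j
      cases j with
      | zero =>
        refine ⟨0, ?_, by simp⟩
        simp only [ncomp, List.get_eq_getElem, List.getElem_zipWith, ← hQ]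
        rw [hnth 0 hj]
        simp
      | succ i =>
        have hi : i < #Q := by simp only at hj; omega
        refine ⟨Nat.nth (· ∈ Q) i, ?_, fun x => ?_⟩
        · simp only [ncomp, List.get_eq_getElem, List.getElem_zipWith, ← hQ,
            List.getElem_cons_succ]
          rw [hnth _ hj, hnth _ hi]
        · rw [Nat.succ_le_iff, lt_iff i hi, Nat.lt_succ_iff]
    have hiff : ∀ x : Fin n, c x = j ↔ (x : ℕ) ∈ Ico a (Nat.nth (· ∈ Q) j) := fun x => by
      rw [Fin.ext_iff, mem_Ico, ← hab]
      have := lt_iff j hj (x + 1)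
      simp only [c]
      omega
    rw [ha, ← Nat.card_Ico]
    have := hle j hj
    exact card_bij (fun x _ => (x : ℕ)) (fun x hx => (hiff x).1 (by simpa using hx))
      (fun x _ y _ h => Fin.ext h)
      (fun y hy => ⟨⟨y, by rw [mem_Ico] at hy; omega⟩, by
        simpa using (hiff ⟨y, by rw [mem_Ico] at hy; omega⟩).2 hy, rfl⟩)
  · have step : ∀ x y : Fin n, (y : ℕ) = x + 1 → c x = c y → f y < f x := by
      intro x y hxy hcxy
      have hy : (y : ℕ) ∈ J := by
        by_contra hyJ
        have hyQ : (y : ℕ) ∈ Q := by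
          simp only [hQ, mem_sdiff, mem_Icc]
          exact ⟨⟨by omega, y.2.le⟩, hyJ⟩
        have h2 := Fin.ext_iff.1 hcxy
        simp only [c, Nat.count_succ _ (y : ℕ), hyQ, if_true] at h2
        rw [hxy] at h2
        omega
      obtain ⟨_, hyn, hlt⟩ := mem_filter.1 (h hy)
      convert hlt using 2
      exact Fin.ext (by simp [hxy])
    have main : ∀ d : ℕ, ∀ x y : Fin n, (y : ℕ) = x + (d + 1) → c x = c y → f y < f x := by
      intro d
      induction d with
      | zero => exact step
      | succ d ih =>
        intro x y hxy hcxy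
        let z : Fin n := ⟨x + (d + 1), by omega⟩
        have hxz : c x ≤ c z := hmono (Fin.le_def.2 (by simp [z]))
        have hzy : c z ≤ c y := hmono (Fin.le_def.2 (by simp only [z]; omega))
        have e1 : c x = c z := le_antisymm hxz (hcxy ▸ hzy)
        exact (step z y (by simp only [z]; omega) (e1 ▸ hcxy)).trans (ih x z rfl e1)
    intro x y hxy hcxy
    exact main (y - x - 1) x y (by have := Fin.lt_def.1 hxy; omega) hcxy
  · intro i hi
    have hi' := mem_Icc.1 (hJ hi)
    refine mem_filter.2 ⟨mem_Ico.2 ⟨hi'.1, by omega⟩, by omega, h _ _ ?_ ?_⟩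
    · exact Fin.lt_def.2 (by simp only; omega)
    · have hiQ : i ∉ Q := fun h => (mem_sdiff.1 h).2 hi
      refine Fin.ext ?_
      simp only [c, Nat.count_succ _ i, hiQ, if_false]
      rw [Nat.sub_add_cancel hi'.1, add_zero]

/-- The number of permutations `f` of `{1,…,n}` with `Des (f⁻¹) ⊇ I` and `Des f ⊇ J`
equals the number of `k × ℓ` matrices of non-negative integers whose `i`-th row sums
to `p_i` and whose `j`-th column sums to `q_j`, where `(p₁,…,p_k)` and `(q₁,…,q_ℓ)`
are the `n`-compositions of `I` and `J`. -/
theorem card_descents_superset_pair_eq_card_matrices (n : ℕ) (hn : 1 ≤ n)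
    (I J : Finset ℕ) (hI : I ⊆ Finset.Icc 1 (n - 1)) (hJ : J ⊆ Finset.Icc 1 (n - 1)) :
    Nat.card {f : Equiv.Perm (Fin n) // I ⊆ Des f⁻¹ ∧ J ⊆ Des f} =
      Nat.card {A : Fin (ncomp n I).length → Fin (ncomp n J).length → ℕ //
        (∀ i, ∑ j, A i j = (ncomp n I).get i) ∧
        (∀ j, ∑ i, A i j = (ncomp n J).get j)} := by
  obtain ⟨r, hr, hr1, hr2⟩ := exists_block n hn I hI
  obtain ⟨c, hc, hc1, hc2⟩ := exists_block n hn J hJ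
  simp only [hr2, hc2, ← hr1, ← hc1]
  exact card_decOn_eq hr hc
end

section
/- Let n ≥ 1, let I, J ⊆ {1,…,n−1}, and let (q_1,…,q_ℓ) be the n-composition of J. Then the number of permutations f of {1,…,n} satisfying Des(f⁻¹) = I and Des(f) ⊇ J equals the number of functions φ : {1,…,n} → {1,…,ℓ} such that #φ⁻¹(j) = q_j for every j ∈ {1,…,ℓ} and such that, for every i ∈ {1,…,n−1}, one has i ∈ I if and only if φ(i) ≥ φ(i+1). -/
/-- For strictly increasing `p`, the indices `i` with `p i ≤ x` form an initial segment, so their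
number exceeds `k` exactly when `k` is one of them. -/
theorem lt_card_filter_iff {m : ℕ} {p : Fin m → ℕ} (hp : StrictMono p) (x : ℕ) (k : Fin m) :
    (k : ℕ) < (Finset.univ.filter fun i => p i ≤ x).card ↔ p k ≤ x := by
  constructor
  · intro h
    by_contra hk
    have hsub : (Finset.univ.filter fun i => p i ≤ x) ⊆ Finset.Iio k := by
      intro i hi
      simp only [Finset.mem_filter, Finset.mem_univ, true_and] at hi
      rw [Finset.mem_Iio]
      exact hp.lt_iff_lt.1 (by omega)
    have := Finset.card_le_card hsub
    rw [Fin.card_Iio] at this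
    omega
  · intro h
    have hsub : Finset.Iic k ⊆ (Finset.univ.filter fun i => p i ≤ x) := by
      intro i hi
      simp only [Finset.mem_filter, Finset.mem_univ, true_and]
      exact (hp.monotone (Finset.mem_Iic.1 hi)).trans h
    have := Finset.card_le_card hsub
    rw [Fin.card_Iic] at this
    omega

theorem card_fin_between {n a c : ℕ} (hc : c ≤ n) :
    Nat.card {x : Fin n // a ≤ (x : ℕ) ∧ (x : ℕ) < c} = c - a := by
  rw [← Nat.card_Ico, ← Nat.card_eq_finsetCard]
  exact Nat.card_congr
    { toFun := fun x => ⟨x.1, Finset.mem_Ico.2 x.2⟩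
      invFun := fun x => ⟨⟨x.1, (Finset.mem_Ico.1 x.2).2.trans_le hc⟩, Finset.mem_Ico.1 x.2⟩
      left_inv := fun _ => rfl
      right_inv := fun _ => rfl }

/-- The block map `b` of `J`: it sends the position `x + 1` to the index of its block. -/
theorem exists_block_s5 (n : ℕ) (hn : 1 ≤ n) (J : Finset ℕ) (hJ : J ⊆ Finset.Icc 1 (n - 1)) :
    ∃ b : Fin n → Fin (ncomp n J).length, Monotone b ∧
      (∀ i : ℕ, ∀ _ : 1 ≤ i, ∀ h2 : i < n,
        (i ∈ J ↔ b ⟨i - 1, Nat.lt_of_le_of_lt (Nat.sub_le i 1) h2⟩ = b ⟨i, h2⟩)) ∧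
      ∀ j, Nat.card {x : Fin n // b x = j} = (ncomp n J).get j := by
  set L := ((Finset.Icc 1 n) \ J).sort (· ≤ ·) with hL
  have hlen : (ncomp n J).length = L.length := by simp [ncomp, hL]
  have hmem : ∀ i, i ∈ L ↔ (1 ≤ i ∧ i ≤ n) ∧ i ∉ J := by intro i; simp [hL]
  have hsorted : StrictMono L.get := (Finset.sortedLT_sort _).strictMono_get
  let p : Fin (ncomp n J).length → ℕ := fun k => L.get (Fin.cast hlen k)
  have hp : StrictMono p := fun i j hij => hsorted (by simpa using hij)
  have hpmem : ∀ i, i ∈ L ↔ ∃ k, p k = i := by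
    intro i
    rw [List.mem_iff_get]
    exact ⟨fun ⟨k, hk⟩ => ⟨Fin.cast hlen.symm k, by simpa [p] using hk⟩, fun ⟨k, hk⟩ => ⟨_, hk⟩⟩
  have hnJ : n ∉ J := fun h => by have := Finset.mem_Icc.1 (hJ h); omega
  obtain ⟨kn, hkn⟩ := (hpmem n).1 ((hmem n).2 ⟨⟨hn, le_rfl⟩, hnJ⟩)
  have hlt : ∀ x : Fin n,
      (Finset.univ.filter fun i => p i ≤ (x : ℕ)).card < (ncomp n J).length := by
    intro x
    by_contra h
    have := (lt_card_filter_iff hp x kn).1 (by have := kn.2; omega)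
    omega
  refine ⟨fun x => ⟨(Finset.univ.filter fun i => p i ≤ (x : ℕ)).card, hlt x⟩, ?_, ?_, ?_⟩
  · intro x y hxy
    refine Fin.mk_le_mk.2 (Finset.card_le_card ?_)
    intro i hi
    simp only [Finset.mem_filter, Finset.mem_univ, true_and] at hi ⊢
    exact hi.trans hxy
  · intro i h1 h2
    have key : i ∉ J ↔ ∃ k, p k = i := by
      rw [← hpmem, hmem]
      exact ⟨fun h => ⟨⟨h1, h2.le⟩, h⟩, fun h => h.2⟩
    rw [Fin.mk.injEq, ← not_iff_not, key]
    constructor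
    · rintro ⟨k, hk⟩ heq
      have e1 := lt_card_filter_iff hp (i - 1) k
      have e2 := lt_card_filter_iff hp i k
      simp only at heq
      rw [heq, e2] at e1
      omega
    · intro hne
      by_contra hno
      push Not at hno
      apply hne
      congr 1
      ext k
      simp only [Finset.mem_filter, Finset.mem_univ, true_and]
      have := hno k
      omega
  · intro j
    have hpn : p j ≤ n := ((hmem _).1 ((hpmem _).2 ⟨j, rfl⟩)).1.2
    -- the end of the preceding block, with the convention `p₀ = 0`
    obtain ⟨a, ha1, ha2⟩ : ∃ a, (ncomp n J).get j = p j - a ∧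
        ∀ x : ℕ, (j : ℕ) ≤ (Finset.univ.filter fun i => p i ≤ x).card ↔ a ≤ x := by
      obtain ⟨j, hj⟩ := j
      cases j with
      | zero => exact ⟨0, by simp [ncomp, p, ← hL]; rfl, by simp⟩
      | succ j =>
        refine ⟨p ⟨j, by omega⟩, by simp [ncomp, p, ← hL]; rfl, fun x => ?_⟩
        exact lt_card_filter_iff hp x ⟨j, by omega⟩
    rw [ha1, ← card_fin_between hpn]
    refine Nat.card_congr (Equiv.subtypeEquivRight fun x => ?_)
    rw [← ha2, Fin.ext_iff, ← not_le, ← lt_card_filter_iff hp]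
    simp only
    omega

/-- By monotonicity of `b`, two positions in one block are joined by positions of that block, so
descents at the elements of `J` chain up to decrease on the whole block. -/
theorem subset_Des_iff_antitone_on_blocks {n m : ℕ} {J : Finset ℕ}
    (hJ : J ⊆ Finset.Icc 1 (n - 1))
    {b : Fin n → Fin m} (hb : Monotone b)
    (hbJ : ∀ i : ℕ, ∀ _ : 1 ≤ i, ∀ h2 : i < n,
        (i ∈ J ↔ b ⟨i - 1, Nat.lt_of_le_of_lt (Nat.sub_le i 1) h2⟩ = b ⟨i, h2⟩))
    (f : Equiv.Perm (Fin n)) :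
    J ⊆ Des f ↔ ∀ x y, x < y → b x = b y → f y < f x := by
  constructor
  · intro h
    have key : ∀ d x (hx : x + d + 1 < n), b ⟨x, by omega⟩ = b ⟨x + d + 1, hx⟩ →
        f ⟨x + d + 1, hx⟩ < f ⟨x, by omega⟩ := by
      intro d
      induction d with
      | zero =>
        intro x hx hxy
        have hm := h ((hbJ (x + 1) (by omega) hx).2 (by simpa using hxy))
        simpa [Des, hx] using hm
      | succ d ih =>
        intro x hx hxy
        have l1 : b ⟨x, by omega⟩ ≤ b ⟨x + d + 1, by omega⟩ := hb (Fin.mk_le_mk.2 (by omega))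
        have l2 : b ⟨x + d + 1, by omega⟩ ≤ b ⟨x + (d + 1) + 1, hx⟩ :=
          hb (Fin.mk_le_mk.2 (by omega))
        have hm := h ((hbJ (x + (d + 1) + 1) (by omega) hx).2
          (le_antisymm l2 (hxy ▸ l1)))
        have hm' : f ⟨x + (d + 1) + 1, hx⟩ < f ⟨x + d + 1, by omega⟩ :=
          (Finset.mem_filter.1 hm).2.2
        exact hm'.trans (ih x (by omega) (le_antisymm l1 (hxy ▸ l2)))
    intro x y hxy hbxy
    obtain ⟨x, hx⟩ := x
    obtain ⟨y, hy⟩ := y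
    have hlt : x < y := hxy
    obtain ⟨d, rfl⟩ : ∃ d, y = x + d + 1 := ⟨y - x - 1, by omega⟩
    exact key d x hy hbxy
  · intro h i hi
    have := Finset.mem_Icc.1 (hJ hi)
    have h2 : i < n := by omega
    simp only [Des, Finset.mem_filter, Finset.mem_Ico]
    exact ⟨⟨this.1, h2⟩, h2, h _ _ (Fin.mk_lt_mk.2 (by omega)) ((hbJ i this.1 h2).1 hi)⟩

theorem inv_lt_inv_iff_block {n m : ℕ} {b : Fin n → Fin m} (hb : Monotone b)
    {f : Equiv.Perm (Fin n)} (hf : ∀ x y, x < y → b x = b y → f y < f x) (x y : Fin n) :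
    f⁻¹ x < f⁻¹ y ↔ b (f⁻¹ x) < b (f⁻¹ y) ∨ (b (f⁻¹ x) = b (f⁻¹ y) ∧ y < x) := by
  constructor
  · intro h
    rcases (hb h.le).lt_or_eq with h' | h'
    · exact Or.inl h'
    · exact Or.inr ⟨h', by simpa using hf _ _ h h'⟩
  · rintro (h | ⟨h, hlt⟩)
    · exact hb.reflect_lt h
    · by_contra hle
      rcases (not_lt.1 hle).lt_or_eq with h' | h'
      · have := hf _ _ h' h.symm
        exact lt_asymm (by simpa using this) hlt
      · exact hlt.ne (f⁻¹.injective h')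

theorem exists_perm_of_card_fiber_eq {n m : ℕ} {b φ : Fin n → Fin m} (hb : Monotone b)
    (hφ : ∀ j, Nat.card {x // φ x = j} = Nat.card {x // b x = j}) :
    ∃ f : Equiv.Perm (Fin n), (∀ x y, x < y → b x = b y → f y < f x) ∧ φ ∘ f = b := by
  let key : Fin n → Fin m ×ₗ (Fin n)ᵒᵈ := fun x => toLex (φ x, OrderDual.toDual x)
  have hkey : Function.Injective key := fun x y h => by
    have h' : (φ x, OrderDual.toDual x) = (φ y, OrderDual.toDual y) := toLex.injective h
    simpa using congrArg Prod.snd h'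
  let f := Tuple.sort key
  have hf : StrictMono (key ∘ f) :=
    (Tuple.monotone_sort key).strictMono_of_injective (hkey.comp f.injective)
  have hlex : ∀ x y, x < y → φ (f x) < φ (f y) ∨ φ (f x) = φ (f y) ∧ f y < f x := by
    intro x y hxy
    have := hf hxy
    simpa [key, Prod.Lex.toLex_lt_toLex] using this
  have hmono : Monotone (φ ∘ f) := by
    intro x y hxy
    rcases hxy.lt_or_eq with h | rfl
    · rcases hlex x y h with h | h
      · exact h.le
      · exact h.1.le
    · exact le_rfl
  -- equality of fibre sizes makes `b` a rearrangement of `φ`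
  let e : Equiv.Perm (Fin n) :=
    Equiv.ofFiberEquiv (f := b) (g := φ) fun j => (Finite.card_eq.1 (hφ j).symm).some
  have he : φ ∘ e = b := by
    funext x
    exact Equiv.ofFiberEquiv_map _ x
  have heq : φ ∘ f = b := by
    rw [← he]
    exact Tuple.unique_monotone hmono (by rw [he]; exact hb)
  refine ⟨f, fun x y hxy hbxy => ?_, heq⟩
  rw [← heq] at hbxy
  rcases hlex x y hxy with h | h
  · exact absurd hbxy h.ne
  · exact h.2

theorem eq_of_comp_inv_eq {n m : ℕ} {b : Fin n → Fin m} (hb : Monotone b)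
    {f g : Equiv.Perm (Fin n)} (hf : ∀ x y, x < y → b x = b y → f y < f x)
    (hg : ∀ x y, x < y → b x = b y → g y < g x) (h : ∀ x, b (f⁻¹ x) = b (g⁻¹ x)) : f = g := by
  have hiff : ∀ x y, f⁻¹ x < f⁻¹ y ↔ g⁻¹ x < g⁻¹ y := by
    intro x y
    rw [inv_lt_inv_iff_block hb hf, inv_lt_inv_iff_block hb hg, h, h]
  have hmono : Monotone (id ∘ (f⁻¹ * g : Equiv.Perm (Fin n))) := by
    refine StrictMono.monotone fun x y hxy => ?_
    exact (hiff (g x) (g y)).2 (by simpa using hxy)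
  have := Tuple.unique_monotone (f := id) (τ := 1) hmono monotone_id
  have h1 : f⁻¹ * g = 1 := Equiv.ext fun x => congrFun this x
  exact inv_mul_eq_one.1 h1

theorem Des_inv_eq_iff_block {n m : ℕ} {I : Finset ℕ} (hI : I ⊆ Finset.Icc 1 (n - 1))
    {b : Fin n → Fin m} (hb : Monotone b)
    {f : Equiv.Perm (Fin n)} (hf : ∀ x y, x < y → b x = b y → f y < f x) :
    Des f⁻¹ = I ↔ ∀ i : ℕ, ∀ _ : 1 ≤ i, ∀ h2 : i < n,
      (i ∈ I ↔ b (f⁻¹ ⟨i, h2⟩) ≤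
        b (f⁻¹ ⟨i - 1, Nat.lt_of_le_of_lt (Nat.sub_le i 1) h2⟩)) := by
  have key : ∀ i : ℕ, ∀ h1 : 1 ≤ i, ∀ h2 : i < n, (i ∈ Des f⁻¹ ↔ b (f⁻¹ ⟨i, h2⟩) ≤
        b (f⁻¹ ⟨i - 1, Nat.lt_of_le_of_lt (Nat.sub_le i 1) h2⟩)) := by
    intro i h1 h2
    have hlt : (⟨i - 1, Nat.lt_of_le_of_lt (Nat.sub_le i 1) h2⟩ : Fin n) < ⟨i, h2⟩ :=
      Fin.mk_lt_mk.2 (by omega)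
    simp only [Des, Finset.mem_filter, Finset.mem_Ico, h1, h2, and_self, true_and, exists_true_left]
    rw [inv_lt_inv_iff_block hb hf, le_iff_lt_or_eq]
    simp only [hlt, and_true]
  constructor
  · rintro rfl
    exact key
  · intro h
    ext i
    by_cases hi : 1 ≤ i ∧ i < n
    · rw [key i hi.1 hi.2, h i hi.1 hi.2]
    · constructor
      · intro hm
        exact absurd (Finset.mem_Ico.1 (Finset.mem_filter.1 hm).1) hi
      · intro hm
        have := Finset.mem_Icc.1 (hI hm)
        omega

/-- The number of permutations `f` of `{1,…,n}` with `Des (f⁻¹) = I` and `Des f ⊇ J`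
equals the number of functions `φ : {1,…,n} → {1,…,ℓ}` whose fibre over `j` has
`q_j` elements and such that, for `1 ≤ i ≤ n-1`, one has `i ∈ I` iff `φ(i) ≥ φ(i+1)`;
here `(q₁,…,q_ℓ)` is the `n`-composition of `J` (positions are 1-based, so position
`i` is index `i-1` of `Fin n`). -/
theorem card_descents_eq_card_functions (n : ℕ) (hn : 1 ≤ n)
    (I J : Finset ℕ) (hI : I ⊆ Finset.Icc 1 (n - 1)) (hJ : J ⊆ Finset.Icc 1 (n - 1)) :
    Nat.card {f : Equiv.Perm (Fin n) // Des f⁻¹ = I ∧ J ⊆ Des f} =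
      Nat.card {φ : Fin n → Fin (ncomp n J).length //
        (∀ j, Nat.card {x : Fin n // φ x = j} = (ncomp n J).get j) ∧
        (∀ i : ℕ, ∀ h1 : 1 ≤ i, ∀ h2 : i < n,
          (i ∈ I ↔ φ ⟨i, h2⟩ ≤ φ ⟨i - 1, Nat.lt_of_le_of_lt (Nat.sub_le i 1) h2⟩))} := by
  obtain ⟨b, hb, hbJ, hfib⟩ := exists_block_s5 n hn J hJ
  have hdec := subset_Des_iff_antitone_on_blocks hJ hb hbJ
  refine Nat.card_congr (Equiv.ofBijective (fun f => ⟨fun x => b (f.1⁻¹ x), ?_, ?_⟩) ⟨?_, ?_⟩)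
  · intro j
    rw [← hfib j]
    exact Nat.card_congr (f.1⁻¹.subtypeEquiv fun x => Iff.rfl)
  · exact (Des_inv_eq_iff_block hI hb ((hdec f.1).1 f.2.2)).1 f.2.1
  · intro f g hfg
    refine Subtype.ext (eq_of_comp_inv_eq hb ((hdec f.1).1 f.2.2) ((hdec g.1).1 g.2.2) fun x => ?_)
    exact congrFun (congrArg Subtype.val hfg) x
  · rintro ⟨φ, hcard, hφI⟩
    obtain ⟨f, hf, hfb⟩ := exists_perm_of_card_fiber_eq hb fun j => (hcard j).trans (hfib j).symm
    have hval : (fun x => b (f⁻¹ x)) = φ := by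
      funext x
      simp [← hfb]
    refine ⟨⟨f, (Des_inv_eq_iff_block hI hb hf).2 ?_, (hdec f).2 hf⟩, Subtype.ext hval⟩
    subst hval
    exact hφI
end

section
/- Fix n ≥ 1 and let M' be the 2^{n−1} × 2^{n−1} matrix with natural-number entries, indexed by the subsets of {1,…,n−1}, defined by M'_{I,J} = #{f a permutation of {1,…,n} : Des(f⁻¹) = I and Des(f) ⊇ J}. Then for every d ≥ 1 and every permutation y of {1,…,n}, the number b_{n,d}(y) of normal sequences of length d ending with y equals Σ_I (M'^{d−1})_{I,J}, where J = Des(y⁻¹); that is, b_{n,d}(y) is the J-entry of the row vector (1,1,…,1)·M'^{d−1}. -/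
/-- A sequence `(f₁,…,f_d)` of permutations of `{1,…,n}` is normal if
`Des (f_{k+1}⁻¹) ⊆ Des (f_k)` holds for every `1 ≤ k < d`. -/
def IsNormalSeq {n d : ℕ} (f : Fin d → Equiv.Perm (Fin n)) : Prop :=
  ∀ (k : ℕ) (h : k + 1 < d),
    Des (f ⟨k + 1, h⟩)⁻¹ ⊆ Des (f ⟨k, Nat.lt_of_succ_lt h⟩)

/-- `b n d`: the number of normal sequences of length `d` of permutations of `{1,…,n}`. -/
noncomputable def b (n d : ℕ) : ℕ :=
  Nat.card {f : Fin d → Equiv.Perm (Fin n) // IsNormalSeq f}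

/-- `bx n d y`: the number of normal sequences of length `d` of permutations of
`{1,…,n}` whose last entry is `y`. -/
noncomputable def bx (n d : ℕ) (y : Equiv.Perm (Fin n)) : ℕ :=
  Nat.card {f : Fin d → Equiv.Perm (Fin n) //
    IsNormalSeq f ∧ ∀ h : 0 < d, f ⟨d - 1, Nat.sub_lt h Nat.one_pos⟩ = y}

instance (s : Finset ℕ) : Fintype {I : Finset ℕ // I ⊆ s} :=
  Fintype.subtype s.powerset fun _ => Finset.mem_powerset

/-- The matrix `M'_n`, indexed by the subsets of `{1,…,n-1}`, whose `(I,J)`-entry is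
the number `a_{n,I,J}` of permutations `f` of `{1,…,n}` with `Des (f⁻¹) = I` and
`Des f ⊇ J`. -/
noncomputable def M' (n : ℕ) :
    Matrix {I : Finset ℕ // I ⊆ Finset.Icc 1 (n - 1)}
      {I : Finset ℕ // I ⊆ Finset.Icc 1 (n - 1)} ℕ :=
  fun I J => Nat.card {f : Equiv.Perm (Fin n) // Des f⁻¹ = I.1 ∧ J.1 ⊆ Des f}

theorem Des_subset_Icc {n : ℕ} (f : Equiv.Perm (Fin n)) : Des f ⊆ Finset.Icc 1 (n - 1) := by
  intro i hi
  have := Finset.mem_Ico.1 (Finset.mem_filter.1 hi).1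
  exact Finset.mem_Icc.2 ⟨this.1, by omega⟩

theorem bx_one (n : ℕ) (y : Equiv.Perm (Fin n)) : bx n 1 y = 1 := by
  unfold bx
  rw [Nat.card_eq_one_iff_unique]
  refine ⟨⟨?_⟩, ⟨⟨fun _ => y, ?_, fun _ => rfl⟩⟩⟩
  · rintro ⟨f, _, hf⟩ ⟨g, _, hg⟩
    apply Subtype.ext
    funext i
    rw [Subsingleton.elim i ⟨1 - 1, Nat.sub_lt Nat.one_pos Nat.one_pos⟩]
    exact (hf Nat.one_pos).trans (hg Nat.one_pos).symm
  · intro k h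
    omega

/-- Appending one entry keeps a nonempty sequence normal exactly when the descent condition holds
at the new junction. -/
theorem isNormalSeq_snoc {n d : ℕ} (g : Fin (d + 1) → Equiv.Perm (Fin n))
    (y : Equiv.Perm (Fin n)) :
    IsNormalSeq (Fin.snoc g y : Fin (d + 2) → Equiv.Perm (Fin n)) ↔
      IsNormalSeq g ∧ Des y⁻¹ ⊆ Des (g (Fin.last d)) := by
  constructor
  · intro h
    refine ⟨fun k hk => ?_, ?_⟩
    · have := h k (by omega)
      simpa [Fin.snoc, hk, Nat.lt_of_succ_lt hk] using this
    · have := h d (by omega)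
      simpa [Fin.snoc, Fin.last] using this
  · rintro ⟨h1, h2⟩ k hk
    by_cases hkd : k + 1 < d + 1
    · have := h1 k hkd
      simpa [Fin.snoc, hkd, Nat.lt_of_succ_lt hkd] using this
    · obtain rfl : k = d := by omega
      simpa [Fin.snoc, Fin.last] using h2

/-- Removing the last entry of a normal sequence gives the recurrence for the counts. -/
theorem bx_succ_succ (n d : ℕ) (y : Equiv.Perm (Fin n)) :
    bx n (d + 2) y =
      ∑ x : Equiv.Perm (Fin n) with Des y⁻¹ ⊆ Des x, bx n (d + 1) x := by
  classical
  have e : {f : Fin (d + 2) → Equiv.Perm (Fin n) //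
        IsNormalSeq f ∧ ∀ h : 0 < d + 2, f ⟨d + 2 - 1, Nat.sub_lt h Nat.one_pos⟩ = y} ≃
      Σ x : {x : Equiv.Perm (Fin n) // Des y⁻¹ ⊆ Des x},
        {g : Fin (d + 1) → Equiv.Perm (Fin n) // IsNormalSeq g ∧
          ∀ h : 0 < d + 1, g ⟨d + 1 - 1, Nat.sub_lt h Nat.one_pos⟩ = x.1} :=
    { toFun := fun f =>
        have hf : IsNormalSeq (Fin.init f.1) ∧ Des y⁻¹ ⊆ Des (Fin.init f.1 (Fin.last d)) := by
          obtain ⟨f, hf, hfy⟩ := f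
          have hy : f (Fin.last (d + 1)) = y := hfy (by omega)
          subst hy
          rw [← isNormalSeq_snoc]
          exact (Fin.snoc_init_self f).symm ▸ hf
        ⟨⟨Fin.init f.1 (Fin.last d), hf.2⟩, ⟨Fin.init f.1, hf.1, fun _ => rfl⟩⟩
      invFun := fun p => ⟨Fin.snoc p.2.1 y, by
        obtain ⟨⟨x, hx⟩, g, hg, hgx⟩ := p
        have hgx' : g (Fin.last d) = x := hgx (by omega)
        refine ⟨(isNormalSeq_snoc g y).2 ⟨hg, hgx' ▸ hx⟩, fun _ => ?_⟩
        exact Fin.snoc_last (α := fun _ => Equiv.Perm (Fin n)) y g⟩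
      left_inv := by
        rintro ⟨f, hf, hfy⟩
        have hy : f (Fin.last (d + 1)) = y := hfy (by omega)
        subst hy
        exact Subtype.ext (Fin.snoc_init_self f)
      right_inv := by
        rintro ⟨⟨x, hx⟩, g, hg, hgx⟩
        have hgx' : g (Fin.last d) = x := hgx (by omega)
        subst hgx'
        have hi : Fin.init (Fin.snoc g y : Fin (d + 2) → Equiv.Perm (Fin n)) = g :=
          Fin.init_snoc (α := fun _ => Equiv.Perm (Fin n)) y g
        dsimp only
        -- The proof components mention `Fin.init (Fin.snoc g y)`, so they are abstracted
        -- before rewriting with `hi`.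
        generalize_proofs p1 p2 p3 p4
        revert p2 p3
        rw [hi]
        intros
        rfl }
  unfold bx
  rw [Nat.card_congr e, Nat.card_sigma]
  exact (Finset.sum_subtype _ (fun x => by simp)
    (fun x => Nat.card {g : Fin (d + 1) → Equiv.Perm (Fin n) // IsNormalSeq g ∧
      ∀ h : 0 < d + 1, g ⟨d + 1 - 1, Nat.sub_lt h Nat.one_pos⟩ = x})).symm

/-- `b_{n,d}(y)` is the `J`-entry of the row vector `(1,…,1) · M'_n^{d-1}`,
where `J = Des (y⁻¹)`. -/
theorem bx_eq_sum_pow_M' (n d : ℕ) (hn : 1 ≤ n) (hd : 1 ≤ d) (y : Equiv.Perm (Fin n))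
    (J : {I : Finset ℕ // I ⊆ Finset.Icc 1 (n - 1)}) (hJ : J.1 = Des y⁻¹) :
    bx n d y = ∑ I, (M' n ^ (d - 1)) I J := by
  classical
  obtain ⟨d, rfl⟩ : ∃ e, d = e + 1 := ⟨d - 1, by omega⟩
  clear hd
  rw [Nat.add_sub_cancel]
  induction d generalizing y J with
  | zero => simp [bx_one, Matrix.one_apply]
  | succ d ih =>
    have hM : ∀ K, M' n K J =
        ((Finset.univ.filter fun x : Equiv.Perm (Fin n) => Des y⁻¹ ⊆ Des x).filter
          fun x => (⟨Des x⁻¹, Des_subset_Icc _⟩ :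
            {I : Finset ℕ // I ⊆ Finset.Icc 1 (n - 1)}) = K).card := by
      intro K
      rw [M', Nat.card_eq_fintype_card, Fintype.card_subtype, Finset.filter_filter, hJ]
      congr 1
      ext x
      simp [Subtype.ext_iff, and_comm]
    rw [bx_succ_succ, ← Finset.sum_fiberwise _ (fun x : Equiv.Perm (Fin n) =>
      (⟨Des x⁻¹, Des_subset_Icc _⟩ : {I : Finset ℕ // I ⊆ Finset.Icc 1 (n - 1)}))]
    simp only [pow_succ, Matrix.mul_apply]
    rw [Finset.sum_comm]
    refine Finset.sum_congr rfl fun K _ => ?_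
    rw [← Finset.sum_mul, hM, mul_comm, ← smul_eq_mul, ← Finset.sum_const]
    refine Finset.sum_congr rfl fun x hx => ih x K ?_
    rw [← (Finset.mem_filter.1 hx).2]
end

section
/- Let n ≥ 1, d ≥ 1, and let y, y' be permutations of {1,…,n} such that the n-composition of Des(y'⁻¹) is a rearrangement of the n-composition of Des(y⁻¹) (i.e., Des(y⁻¹) and Des(y'⁻¹) have the same n-partition). Then b_{n,d}(y) = b_{n,d}(y'), i.e., the number of normal sequences of length d ending with y equals the number of normal sequences of length d ending with y'. -/
/-! ### Sorting words -/

/-- A monotone tuple is determined by the multiset of its values. -/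
theorem mono_unique {L : Type*} [LinearOrder L] {n : ℕ} {f g : Fin n → L} (hf : Monotone f)
    (hg : Monotone g)
    (h : (Finset.univ : Finset (Fin n)).val.map f = (Finset.univ : Finset (Fin n)).val.map g) :
    f = g := by
  have hp : (List.ofFn f).Perm (List.ofFn g) := by
    rw [← Multiset.coe_eq_coe]
    simpa [List.ofFn_eq_map, Fin.univ_def] using h
  exact List.ofFn_injective
    (hp.eq_of_sortedLE hf.sortedLE_ofFn hg.sortedLE_ofFn)

/-- Every multiset of size `n` is the multiset of values of a monotone `n`-tuple, namely of its
sorted enumeration. -/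
theorem exists_mono {L : Type*} [LinearOrder L] {n : ℕ} (m : Multiset L)
    (hm : Multiset.card m = n) :
    ∃ f : Fin n → L, Monotone f ∧ (Finset.univ : Finset (Fin n)).val.map f = m := by
  subst hm
  have hl : (m.sort (· ≤ ·)).length = Multiset.card m := Multiset.length_sort ..
  refine ⟨fun i => (m.sort (· ≤ ·)).get (i.cast hl.symm), ?_, ?_⟩
  · intro i j hij
    exact (Multiset.pairwise_sort m (· ≤ ·)).sortedLE.monotone_get hij
  · have h1 : (List.ofFn fun i : Fin (Multiset.card m) =>
        (m.sort (· ≤ ·)).get (i.cast hl.symm)) = m.sort (· ≤ ·) := by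
      apply List.ext_get
      · simp
      · simp
    have h2 := congrArg (fun l : List L => (l : Multiset L)) h1
    simp only [Multiset.sort_eq] at h2
    refine Eq.trans ?_ h2
    simp [List.ofFn_eq_map, Fin.univ_def]

/-- `w` is weakly decreasing along each block of positions, the blocks being the fibres of `c`. -/
def AntiOn {n : ℕ} {B : Type*} [LE B] (c : Fin n → ℕ) (w : Fin n → B) : Prop :=
  ∀ u v, u < v → c u = c v → w v ≤ w u

/-- Being decreasing on the blocks of a monotone `c` amounts to monotonicity of `(c, w)` for the
lexicographic order in which the second coordinate is reversed. -/
theorem AntiOn.monotone_lex {n : ℕ} {B : Type*} [LinearOrder B] {c : Fin n → ℕ} {w : Fin n → B}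
    (hc : Monotone c) (hw : AntiOn c w) :
    Monotone fun v => toLex (c v, OrderDual.toDual (w v)) := by
  intro u v huv
  rcases huv.eq_or_lt with rfl | huv
  · exact le_rfl
  rw [Prod.Lex.toLex_le_toLex]
  rcases (hc huv.le).lt_or_eq with h | h
  · exact Or.inl h
  · exact Or.inr ⟨h, hw u v huv h⟩

/-- A word that decreases on the blocks of `c` is determined by the multiset of pairs
(block, letter). -/
theorem AntiOn.unique {n : ℕ} {B : Type*} [LinearOrder B] {c : Fin n → ℕ} {w w' : Fin n → B}
    (hc : Monotone c) (hw : AntiOn c w) (hw' : AntiOn c w')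
    (h : (Finset.univ : Finset (Fin n)).val.map (fun v => (c v, w v)) =
      (Finset.univ : Finset (Fin n)).val.map (fun v => (c v, w' v))) : w = w' := by
  have h2 := congrArg (Multiset.map fun p : ℕ × B => toLex (p.1, OrderDual.toDual p.2)) h
  simp only [Multiset.map_map, Function.comp_def] at h2
  have := mono_unique (hw.monotone_lex hc) (hw'.monotone_lex hc) h2
  funext v
  have := congrFun this v
  simpa using this

/-- Every multiset of pairs with the correct first marginal comes from a word that decreases on the
blocks of `c`: sort it lexicographically. -/
theorem AntiOn.exists {n : ℕ} {B : Type*} [LinearOrder B] {c : Fin n → ℕ} (hc : Monotone c)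
    (m : Multiset (ℕ × B)) (hm : m.map Prod.fst = (Finset.univ : Finset (Fin n)).val.map c) :
    ∃ w : Fin n → B, AntiOn c w ∧
      (Finset.univ : Finset (Fin n)).val.map (fun v => (c v, w v)) = m := by
  obtain ⟨f, hf, hfm⟩ := exists_mono (n := n)
    (m.map fun p : ℕ × B => toLex (p.1, OrderDual.toDual p.2))
    (by simpa using congrArg Multiset.card hm)
  have hm' : (Finset.univ : Finset (Fin n)).val.map
      (fun v => ((ofLex (f v)).1, OrderDual.ofDual (ofLex (f v)).2)) = m := by
    have := congrArg (Multiset.map fun p : ℕ ×ₗ Bᵒᵈ =>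
      ((ofLex p).1, OrderDual.ofDual (ofLex p).2)) hfm
    simpa [Multiset.map_map, Function.comp_def] using this
  have hc' : (fun v => (ofLex (f v)).1) = c := by
    refine mono_unique (fun u v huv => Prod.Lex.monotone_fst _ _ (hf huv)) hc ?_
    rw [← hm, ← hm', Multiset.map_map]
    rfl
  subst hc'
  refine ⟨fun v => OrderDual.ofDual (ofLex (f v)).2, ?_, hm'⟩
  intro u v huv h
  have := hf huv.le
  rw [Prod.Lex.le_iff] at this
  rcases this with h1 | h1
  · exact absurd h h1.ne
  · exact h1.2

/-! ### Blocks and descents -/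

/-- The number of the block containing the 0-based index `i`, when the positions are cut into maximal
runs such that `i - 1` and `i` lie in the same run exactly when `i ∈ I`. The block lengths form the
`n`-composition of `I`. -/
def blk (I : Finset ℕ) (i : ℕ) : ℕ := (Finset.Icc 1 i \ I).card

theorem blk_mono (I : Finset ℕ) : Monotone (blk I) := fun _ _ h =>
  Finset.card_le_card (Finset.sdiff_subset_sdiff (Finset.Icc_subset_Icc_right h) le_rfl)

theorem blk_succ_of_mem {I : Finset ℕ} {i : ℕ} (h : i + 1 ∈ I) : blk I (i + 1) = blk I i := by
  unfold blk
  rw [← Finset.insert_Icc_right_eq_Icc_add_one (by omega), Finset.insert_sdiff_of_mem _ h]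

theorem blk_lt_succ {I : Finset ℕ} {i : ℕ} (h : i + 1 ∉ I) : blk I i < blk I (i + 1) := by
  apply Finset.card_lt_card
  rw [Finset.ssubset_iff_of_subset
    (Finset.sdiff_subset_sdiff (Finset.Icc_subset_Icc_right (Nat.le_succ i)) le_rfl)]
  exact ⟨i + 1, by simp [h], by simp⟩

/-- `I` consists of descents of `x` exactly when `x` decreases on each block of `I`. -/
theorem subset_Des_iff {n : ℕ} {I : Finset ℕ} (hI : I ⊆ Finset.Ico 1 n) (x : Equiv.Perm (Fin n)) :
    I ⊆ Des x ↔ AntiOn (fun i : Fin n => blk I i) x := by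
  constructor
  · intro h u v huv he
    obtain ⟨u, hu⟩ := u
    obtain ⟨v, hv⟩ := v
    simp only [Fin.mk_lt_mk] at huv he
    induction v, huv using Nat.le_induction with
    | base =>
      have hm : u + 1 ∈ I := by
        by_contra hc
        exact absurd he (blk_lt_succ hc).ne
      have := h hm
      simp only [Des, Finset.mem_filter] at this
      obtain ⟨-, _, h3⟩ := this
      exact h3.le
    | succ v huv ih =>
      have h1 : blk I u = blk I v :=
        le_antisymm (blk_mono I (by omega)) (he ▸ blk_mono I (Nat.le_succ v))
      have hm : v + 1 ∈ I := by
        by_contra hc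
        exact absurd (h1 ▸ he) (blk_lt_succ hc).ne
      have := h hm
      simp only [Des, Finset.mem_filter] at this
      obtain ⟨-, _, h3⟩ := this
      exact h3.le.trans (ih (by omega) h1)
  · intro h i hi
    have := Finset.mem_Ico.1 (hI hi)
    simp only [Des, Finset.mem_filter]
    refine ⟨hI hi, this.2, ?_⟩
    obtain ⟨i, rfl⟩ : ∃ j, i = j + 1 := ⟨i - 1, by omega⟩
    refine lt_of_le_of_ne (h ⟨i, by omega⟩ ⟨i + 1, this.2⟩ (by simp)
      (blk_succ_of_mem hi).symm) ?_
    intro hc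
    have := congrArg Fin.val (x.injective hc)
    simp at this

theorem Des_subset {n : ℕ} (x : Equiv.Perm (Fin n)) : Des x ⊆ Finset.Ico 1 n :=
  Finset.filter_subset _ _

/-- If `x` decreases on the blocks of `a`, then for the inverse of `x` to decrease on the blocks of
`c` it suffices to look at the `a`-blocks in which the values of `x⁻¹` lie: inside a single
`a`-block the order of positions is the reverse of the order of values. -/
theorem AntiOn.comp_symm_iff {n : ℕ} {a c : Fin n → ℕ} (ha : Monotone a) {x : Equiv.Perm (Fin n)}
    (hx : AntiOn a x) : AntiOn c (x⁻¹ : Equiv.Perm (Fin n)) ↔ AntiOn c (fun v => a (x⁻¹ v)) := by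
  constructor
  · intro h u v huv he
    exact ha (h u v huv he)
  · intro h u v huv he
    by_contra! hlt
    have h1 := hx _ _ hlt (le_antisymm (ha hlt.le) (h u v huv he))
    simp only [Equiv.Perm.coe_inv, Equiv.apply_symm_apply] at h1
    exact absurd huv h1.not_gt

/-! ### Pairs of descent conditions and multisets with given marginals -/

/-- The multiset in which each block number of `I` occurs as often as its block is long. -/
def cont (n : ℕ) (I : Finset ℕ) : Multiset ℕ :=
  (Finset.univ : Finset (Fin n)).val.map fun i : Fin n => blk I i

/-- Permutations `x` with `I ⊆ Des x` and `J ⊆ Des x⁻¹` correspond to multisets of pairs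
(`J`-block of a value, `I`-block of its position) with prescribed marginals; equivalently, to
nonnegative integer matrices with given row and column sums. -/
theorem bijOn_margins {n : ℕ} {I J : Finset ℕ} (hI : I ⊆ Finset.Ico 1 n)
    (hJ : J ⊆ Finset.Ico 1 n) :
    Set.BijOn (fun x : Equiv.Perm (Fin n) => (Finset.univ : Finset (Fin n)).val.map
        fun v : Fin n => (blk J v, blk I (x⁻¹ v : Fin n)))
      {x | I ⊆ Des x ∧ J ⊆ Des x⁻¹}
      {m | m.map Prod.fst = cont n J ∧ m.map Prod.snd = cont n I} := by
  have hIm : Monotone fun i : Fin n => blk I i := fun u v h => blk_mono I h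
  have hJm : Monotone fun i : Fin n => blk J i := fun u v h => blk_mono J h
  -- The graph of `x`, enumerated by positions or by values.
  have graph : ∀ x : Equiv.Perm (Fin n), (Finset.univ : Finset (Fin n)).val.map
      (fun i : Fin n => (blk I i, x i)) =
      (Finset.univ : Finset (Fin n)).val.map (fun v => (blk I (x⁻¹ v : Fin n), v)) := by
    intro x
    conv_rhs => rw [← Multiset.map_univ_val_equiv x, Multiset.map_map]
    simp only [Function.comp_def, Equiv.Perm.coe_inv, Equiv.symm_apply_apply]
  refine ⟨?_, ?_, ?_⟩
  · rintro x -
    simp only [Set.mem_ofPred_eq, Multiset.map_map, Function.comp_def, cont, true_and]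
    conv_rhs => rw [← Multiset.map_univ_val_equiv x⁻¹, Multiset.map_map]
    rfl
  · rintro x ⟨hx1, hx2⟩ z ⟨hz1, hz2⟩ h
    rw [subset_Des_iff hI] at hx1 hz1
    rw [subset_Des_iff hJ, hx1.comp_symm_iff hIm] at hx2
    rw [subset_Des_iff hJ, hz1.comp_symm_iff hIm] at hz2
    have hw := AntiOn.unique hJm hx2 hz2 h
    refine Equiv.coe_fn_injective (AntiOn.unique hIm hx1 hz1 ?_)
    rw [graph, graph]
    congr 1
    funext v
    exact congrArg (fun t => (t, v)) (congrFun hw v)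
  · rintro m ⟨hm1, hm2⟩
    obtain ⟨w, hw, hwm⟩ := AntiOn.exists hJm m hm1
    -- `w v` is the `I`-block that must hold the value `v`. Filling each `I`-block decreasingly with
    -- the values assigned to it produces the permutation.
    have hwc : (Finset.univ : Finset (Fin n)).val.map w = cont n I := by
      rw [← hm2, ← hwm, Multiset.map_map]
      rfl
    obtain ⟨x, hx, hxm⟩ := AntiOn.exists hIm
      ((Finset.univ : Finset (Fin n)).val.map fun v => (w v, v))
      (by rw [Multiset.map_map]; exact hwc)
    have hxu : (Finset.univ : Finset (Fin n)).val.map x = Finset.univ.val := by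
      have := congrArg (Multiset.map Prod.snd) hxm
      simpa only [Multiset.map_map, Function.comp_def, Multiset.map_id'] using this
    have hxs : Function.Surjective x := by
      intro v
      have : v ∈ (Finset.univ : Finset (Fin n)).val.map x := by rw [hxu]; simp
      simpa using this
    have hxw : ∀ i, w (x i) = blk I i := by
      intro i
      have : (blk I i, x i) ∈ (Finset.univ : Finset (Fin n)).val.map fun v => (w v, v) := by
        rw [← hxm]
        exact Multiset.mem_map_of_mem (fun i : Fin n => (blk I i, x i)) (Finset.mem_univ i)
      simp only [Multiset.mem_map, Prod.mk.injEq] at this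
      obtain ⟨v, -, h1, rfl⟩ := this
      exact h1
    let X : Equiv.Perm (Fin n) := Equiv.ofBijective x (Finite.injective_iff_bijective.1
      (Finite.injective_iff_surjective.2 hxs))
    have hX : AntiOn (fun i : Fin n => blk I i) X := hx
    have hXw : (fun v => blk I (X⁻¹ v : Fin n)) = w := by
      funext v
      rw [← hxw]
      exact congrArg w (X.apply_symm_apply v)
    refine ⟨X, ⟨(subset_Des_iff hI X).2 hX, ?_⟩, ?_⟩
    · rw [subset_Des_iff hJ, hX.comp_symm_iff hIm]
      rw [hXw]
      exact hw
    · rw [← hwm]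
      simp only [← hXw]

/-- Relabelling the second coordinate does not change the number of multisets of pairs with given
marginals. -/
theorem ncard_margins {C I I' : Multiset ℕ} (σ : Equiv.Perm ℕ) (h : I' = I.map σ) :
    Set.ncard {m : Multiset (ℕ × ℕ) | m.map Prod.fst = C ∧ m.map Prod.snd = I} =
    Set.ncard {m : Multiset (ℕ × ℕ) | m.map Prod.fst = C ∧ m.map Prod.snd = I'} := by
  subst h
  refine Set.ncard_congr (fun m _ => m.map (Prod.map id σ)) ?_ ?_ ?_
  · rintro m ⟨rfl, rfl⟩
    simp [Multiset.map_map]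
  · intro m m' _ _ h
    exact Multiset.map_injective (Function.injective_id.prodMap σ.injective) h
  · rintro m ⟨rfl, h2⟩
    refine ⟨m.map (Prod.map id σ.symm), ⟨?_, ?_⟩, ?_⟩
    · simp [Multiset.map_map]
    · have := congrArg (Multiset.map σ.symm) h2
      simpa [Multiset.map_map, Function.comp_def] using this
    · simp [Multiset.map_map, Prod.map]

/-! ### Block lengths and the `n`-composition -/

/-- For a strictly increasing list `s < p₁ < ⋯ < p_k`, exactly `p_{a+1} - p_a` integers `i` of
`[s, p_k)` have `a` of the `p_j` below or equal to them (with `p₀ = s`). -/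
theorem card_zipWith (P : List ℕ) : ∀ (s : ℕ), (s :: P).Pairwise (· < ·) → ∀ a,
    ((Finset.Ico s ((s :: P).getLast (by simp))).filter
      fun i => P.countP (· ≤ i) = a).card = (List.zipWith (· - ·) P (s :: P)).getD a 0 := by
  induction P with
  | nil => intro s _ a; simp
  | cons p Q ih =>
    intro s hs a
    rw [List.pairwise_cons] at hs
    obtain ⟨h1, h2⟩ := hs
    have hsp : s < p := h1 p (by simp)
    have hpl : p ≤ (p :: Q).getLast (by simp) := by
      rcases List.mem_cons.1 (List.getLast_mem (l := p :: Q) (by simp)) with h | h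
      · exact h.ge
      · exact ((List.pairwise_cons.1 h2).1 _ h).le
    have hQ : ∀ q ∈ Q, p < q := (List.pairwise_cons.1 h2).1
    have low : ∀ i ∈ Finset.Ico s p, (p :: Q).countP (· ≤ i) = 0 := by
      intro i hi
      rw [List.countP_eq_zero]
      intro q hq
      have := (Finset.mem_Ico.1 hi).2
      rcases List.mem_cons.1 hq with rfl | hq
      · simpa using this
      · have := hQ q hq
        simp; omega
    have high : ∀ i ∈ Finset.Ico p ((p :: Q).getLast (by simp)),
        (p :: Q).countP (· ≤ i) = Q.countP (· ≤ i) + 1 := by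
      intro i hi
      rw [List.countP_cons_of_pos]
      simpa using (Finset.mem_Ico.1 hi).1
    rw [List.getLast_cons (by simp), ← Finset.Ico_union_Ico_eq_Ico hsp.le hpl,
      Finset.filter_union, Finset.card_union_of_disjoint (Finset.disjoint_filter_filter
        (Finset.Ico_disjoint_Ico_consecutive _ _ _)),
      Finset.filter_congr (fun i hi => by rw [low i hi]),
      Finset.filter_congr (s := Finset.Ico p _) (fun i hi => by rw [high i hi])]
    cases a with
    | zero => simp
    | succ a =>
      have := ih p h2 a
      simpa using this

/-- The block with number `a` has length the `a`-th entry (from `0`) of the `n`-composition. -/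
theorem count_cont {n : ℕ} (hn : 1 ≤ n) {I : Finset ℕ} (hI : I ⊆ Finset.Ico 1 n) (a : ℕ) :
    (cont n I).count a = (ncomp n I).getD a 0 := by
  set P := (Finset.Icc 1 n \ I).sort (· ≤ ·) with hP
  have hmem : ∀ q, q ∈ P ↔ (1 ≤ q ∧ q ≤ n) ∧ q ∉ I := by simp [hP]
  have hnP : n ∈ P := by
    rw [hmem]
    refine ⟨⟨hn, le_rfl⟩, fun h => ?_⟩
    have := Finset.mem_Ico.1 (hI h)
    omega
  have hs : (0 :: P).Pairwise (· < ·) := by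
    rw [List.pairwise_cons]
    refine ⟨fun q hq => ?_, (Finset.sortedLT_sort _).pairwise⟩
    have := (hmem q).1 hq
    omega
  have hlast : (0 :: P).getLast (by simp) = n := by
    rw [List.getLast_cons (List.ne_nil_of_mem hnP)]
    apply le_antisymm
    · exact ((hmem _).1 (List.getLast_mem _)).1.2
    · exact (Finset.sortedLT_sort _).pairwise.imp (le_of_lt) |>.rel_getLast hnP
  have hblk : ∀ i < n, blk I i = P.countP (· ≤ i) := by
    intro i hi
    have h1 : blk I i = ((Finset.Icc 1 n \ I).filter (· ≤ i)).card := by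
      unfold blk
      congr 1
      ext q
      simp only [Finset.mem_sdiff, Finset.mem_Icc, Finset.mem_filter]
      constructor
      · rintro ⟨⟨h1, h2⟩, h3⟩; exact ⟨⟨⟨h1, by omega⟩, h3⟩, h2⟩
      · rintro ⟨⟨⟨h1, _⟩, h3⟩, h2⟩; exact ⟨⟨h1, h2⟩, h3⟩
    rw [h1, Finset.card_def, Finset.filter_val, ← Multiset.countP_eq_card_filter,
      ← Finset.sort_eq (Finset.Icc 1 n \ I) (· ≤ ·), Multiset.coe_countP]
  have key := card_zipWith P 0 hs a
  rw [hlast] at key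
  change _ = (List.zipWith (· - ·) P (0 :: P)).getD a 0
  rw [← key, cont, Multiset.count_map, ← Finset.filter_val, Finset.card_val]
  refine Finset.card_bij (fun i _ => (i : ℕ)) ?_ ?_ ?_
  · intro i hi
    simp only [Finset.mem_filter, Finset.mem_Ico, Finset.mem_univ, true_and] at hi ⊢
    exact ⟨⟨Nat.zero_le _, i.2⟩, by rw [← hblk i i.2, hi]⟩
  · intro i _ j _ h
    exact Fin.ext h
  · intro i hi
    simp only [Finset.mem_filter, Finset.mem_Ico] at hi
    exact ⟨⟨i, hi.1.2⟩, by simp [hblk i hi.1.2, hi.2], rfl⟩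

/-- Lists that are rearrangements of each other, padded by zeros to functions on `ℕ`, differ by a
permutation of `ℕ`. -/
theorem exists_perm_getD {l l' : List ℕ} (h : l.Perm l') :
    ∃ σ : Equiv.Perm ℕ, ∀ a, l'.getD (σ a) 0 = l.getD a 0 := by
  induction h with
  | nil => exact ⟨1, fun a => rfl⟩
  | cons x _ ih =>
    obtain ⟨σ, hσ⟩ := ih
    refine ⟨⟨fun a => a.casesOn 0 fun k => σ k + 1, fun a => a.casesOn 0 fun k => σ.symm k + 1,
      ?_, ?_⟩, ?_⟩
    · rintro (_ | k) <;> simp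
    · rintro (_ | k) <;> simp
    · rintro (_ | k)
      · simp
      · simpa using hσ k
  | swap x y l =>
    refine ⟨Equiv.swap 0 1, ?_⟩
    rintro (_ | _ | k)
    · simp
    · simp
    · rw [Equiv.swap_apply_of_ne_of_ne (by omega) (by omega)]
      simp
  | trans _ _ ih1 ih2 =>
    obtain ⟨σ, hσ⟩ := ih1
    obtain ⟨τ, hτ⟩ := ih2
    exact ⟨σ.trans τ, fun a => by rw [Equiv.trans_apply, hτ, hσ]⟩

theorem exists_relabel {n : ℕ} (hn : 1 ≤ n) {I I' : Finset ℕ} (hI : I ⊆ Finset.Ico 1 n)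
    (hI' : I' ⊆ Finset.Ico 1 n) (h : (ncomp n I).Perm (ncomp n I')) :
    ∃ σ : Equiv.Perm ℕ, cont n I' = (cont n I).map σ := by
  obtain ⟨σ, hσ⟩ := exists_perm_getD h
  refine ⟨σ, Multiset.ext.2 fun a => ?_⟩
  obtain ⟨a, rfl⟩ := σ.surjective a
  rw [count_cont hn hI', Multiset.count_map_eq_count' _ _ σ.injective, count_cont hn hI, hσ]

/-! ### Counting permutations by descent sets -/

/-- For fixed `J`, the number of `x` with `I ⊆ Des x` and `J ⊆ Des x⁻¹` depends only on the
`n`-partition of `I`. -/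
theorem card_super_eq {n : ℕ} (hn : 1 ≤ n) {I I' : Finset ℕ} (hI : I ⊆ Finset.Ico 1 n)
    (hI' : I' ⊆ Finset.Ico 1 n) (h : (ncomp n I).Perm (ncomp n I')) (J : Finset ℕ)
    (hJ : J ⊆ Finset.Ico 1 n) :
    (Finset.univ.filter fun x : Equiv.Perm (Fin n) => I ⊆ Des x ∧ J ⊆ Des x⁻¹).card =
    (Finset.univ.filter fun x : Equiv.Perm (Fin n) => I' ⊆ Des x ∧ J ⊆ Des x⁻¹).card := by
  obtain ⟨σ, hσ⟩ := exists_relabel hn hI hI' h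
  have key : ∀ K ⊆ Finset.Ico 1 n,
      (Finset.univ.filter fun x : Equiv.Perm (Fin n) => K ⊆ Des x ∧ J ⊆ Des x⁻¹).card =
      Set.ncard {m : Multiset (ℕ × ℕ) | m.map Prod.fst = cont n J ∧ m.map Prod.snd = cont n K} := by
    intro K hK
    rw [← (bijOn_margins hK hJ).image_eq, (bijOn_margins hK hJ).injOn.ncard_image,
      ← Set.ncard_coe_finset]
    simp
  rw [key I hI, key I' hI', ncard_margins σ hσ]

/-- The same with `Des x⁻¹` prescribed exactly. This is Möbius inversion over the supersets of `K`,
carried out as a downward induction on `K`. -/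
theorem card_exact_eq {n : ℕ} (hn : 1 ≤ n) {I I' : Finset ℕ} (hI : I ⊆ Finset.Ico 1 n)
    (hI' : I' ⊆ Finset.Ico 1 n) (h : (ncomp n I).Perm (ncomp n I')) (K : Finset ℕ)
    (hK : K ⊆ Finset.Ico 1 n) :
    (Finset.univ.filter fun x : Equiv.Perm (Fin n) => I ⊆ Des x ∧ Des x⁻¹ = K).card =
    (Finset.univ.filter fun x : Equiv.Perm (Fin n) => I' ⊆ Des x ∧ Des x⁻¹ = K).card := by
  have split : ∀ A : Finset ℕ,
      (Finset.univ.filter fun x : Equiv.Perm (Fin n) => A ⊆ Des x ∧ K ⊆ Des x⁻¹).card =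
      ∑ L ∈ (Finset.Ico 1 n).powerset.filter (K ⊆ ·),
        (Finset.univ.filter fun x : Equiv.Perm (Fin n) => A ⊆ Des x ∧ Des x⁻¹ = L).card := by
    intro A
    rw [Finset.card_eq_sum_card_fiberwise (f := fun x : Equiv.Perm (Fin n) => Des x⁻¹)
      (t := (Finset.Ico 1 n).powerset.filter (K ⊆ ·))]
    · refine Finset.sum_congr rfl fun L hL => ?_
      rw [Finset.filter_filter]
      congr 1
      ext x
      simp only [Finset.mem_filter, Finset.mem_univ, true_and, Finset.mem_powerset] at hL ⊢
      constructor
      · rintro ⟨⟨h1, _⟩, h2⟩; exact ⟨h1, h2⟩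
      · rintro ⟨h1, rfl⟩; exact ⟨⟨h1, hL.2⟩, rfl⟩
    · intro x hx
      simp only [Finset.coe_filter, Finset.mem_univ, true_and, Set.mem_ofPred_eq,
        Finset.mem_powerset] at hx ⊢
      exact ⟨Des_subset _, hx.2⟩
  have hsum := card_super_eq hn hI hI' h K hK
  have hmem : K ∈ (Finset.Ico 1 n).powerset.filter (K ⊆ ·) := by simp [hK]
  rw [split, split, ← Finset.add_sum_erase _ _ hmem, ← Finset.add_sum_erase _ _ hmem,
    Finset.sum_congr rfl fun L hL => ?_] at hsum
  · exact Nat.add_right_cancel hsum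
  · have hL' : L ≠ K ∧ L ⊆ Finset.Ico 1 n ∧ K ⊆ L := by simpa using hL
    have hKL : K.card < L.card :=
      Finset.card_lt_card (lt_of_le_of_ne hL'.2.2 hL'.1.symm)
    have hLn : L.card ≤ n - 1 := by simpa using Finset.card_le_card hL'.2.1
    exact card_exact_eq hn hI hI' h L hL'.2.1
termination_by n - K.card
decreasing_by omega

/-! ### Normal sequences -/

/-- Removing the last entry of a normal sequence. -/
theorem bx_succ {n d : ℕ} (y : Equiv.Perm (Fin n)) :
    bx n (d + 2) y =
      ∑ x ∈ Finset.univ.filter (fun x : Equiv.Perm (Fin n) => Des y⁻¹ ⊆ Des x), bx n (d + 1) x := by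
  classical
  let e : {f : Fin (d + 2) → Equiv.Perm (Fin n) //
      IsNormalSeq f ∧ ∀ h : 0 < d + 2, f ⟨d + 2 - 1, Nat.sub_lt h Nat.one_pos⟩ = y} ≃
      {f : Fin (d + 1) → Equiv.Perm (Fin n) // IsNormalSeq f ∧ Des y⁻¹ ⊆ Des (f (Fin.last d))} :=
    { toFun := fun f => ⟨fun i => f.1 i.castSucc, fun k hk => f.2.1 k (by omega), by
        have h1 := f.2.1 d (by omega)
        have h2 : f.1 ⟨d + 1, by omega⟩ = y := f.2.2 (by omega)
        rw [h2] at h1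
        exact h1⟩
      invFun := fun f => ⟨Fin.snoc (α := fun _ => Equiv.Perm (Fin n)) f.1 y, by
        obtain ⟨f, hf, hl⟩ := f
        refine ⟨fun k hk => ?_, fun _ => by simp [Fin.snoc]⟩
        by_cases hkd : k = d
        · subst hkd
          have hl : Des y⁻¹ ⊆ Des (f ⟨k, by omega⟩) := hl
          simpa [Fin.snoc] using hl
        · have h1 : k < d := by omega
          simpa [Fin.snoc, h1, Nat.lt_succ_of_lt h1] using hf k (by omega)⟩
      left_inv := by
        rintro ⟨f, hf, hl⟩
        have hl : f (Fin.last (d + 1)) = y := hl (by omega)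
        apply Subtype.ext
        funext i
        refine Fin.lastCases ?_ (fun i => ?_) i
        · simpa using hl.symm
        · simp
      right_inv := by
        rintro ⟨f, hf⟩
        apply Subtype.ext
        funext i
        simp }
  have hb : ∀ x : Equiv.Perm (Fin n), bx n (d + 1) x =
      (Finset.univ.filter fun f : Fin (d + 1) → Equiv.Perm (Fin n) =>
        IsNormalSeq f ∧ f (Fin.last d) = x).card := by
    intro x
    rw [bx, Nat.card_eq_fintype_card, Fintype.card_subtype]
    congr 1
    ext f
    simp only [Finset.mem_filter, Finset.mem_univ, true_and]
    exact and_congr_right fun _ => ⟨fun h => h (by omega), fun h _ => h⟩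
  rw [bx, Nat.card_congr e, Nat.card_eq_fintype_card, Fintype.card_subtype,
    Finset.card_eq_sum_card_fiberwise (f := fun f => f (Fin.last d))
      (t := Finset.univ.filter fun x : Equiv.Perm (Fin n) => Des y⁻¹ ⊆ Des x)]
  · refine Finset.sum_congr rfl fun x hx => ?_
    rw [hb, Finset.filter_filter]
    congr 1
    ext f
    simp only [Finset.mem_filter, Finset.mem_univ, true_and] at hx ⊢
    constructor
    · rintro ⟨⟨h1, -⟩, h2⟩; exact ⟨h1, h2⟩
    · rintro ⟨h1, rfl⟩; exact ⟨⟨h1, hx⟩, rfl⟩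
  · intro f hf
    simp only [Finset.coe_filter, Finset.mem_univ, true_and, Set.mem_ofPred_eq] at hf ⊢
    exact hf.2

/-- If `Des (y⁻¹)` and `Des (y'⁻¹)` have the same `n`-partition (their
`n`-compositions are rearrangements of one another), then `b_{n,d}(y) = b_{n,d}(y')`. -/
theorem bx_depends_only_on_partition (n d : ℕ) (hn : 1 ≤ n) (hd : 1 ≤ d)
    (y y' : Equiv.Perm (Fin n))
    (h : (ncomp n (Des y⁻¹)).Perm (ncomp n (Des y'⁻¹))) :
    bx n d y = bx n d y' := by
  induction d, hd using Nat.le_induction generalizing y y' with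
  | base =>
    have h1 : ∀ z : Equiv.Perm (Fin n), bx n 1 z = 1 := by
      intro z
      rw [bx, Nat.card_eq_one_iff_unique]
      refine ⟨⟨fun f g => Subtype.ext (funext fun i => ?_)⟩,
        ⟨⟨fun _ => z, fun k hk => by omega, fun _ => rfl⟩⟩⟩
      have hf := f.2.2 Nat.one_pos
      have hg := g.2.2 Nat.one_pos
      rw [Subsingleton.elim i ⟨1 - 1, Nat.sub_lt Nat.one_pos Nat.one_pos⟩, hf, hg]
    rw [h1, h1]
  | succ d hd ih =>
    obtain ⟨d, rfl⟩ : ∃ e, d = e + 1 := ⟨d - 1, by omega⟩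
    -- By induction the weight of `x` depends on `Des x⁻¹` only, so it is `F (Des x⁻¹)` for some `F`.
    have hF : Function.FactorsThrough (bx n (d + 1)) fun x : Equiv.Perm (Fin n) => Des x⁻¹ := by
      intro x z hxz
      have hxz : Des x⁻¹ = Des z⁻¹ := hxz
      exact ih x z (by rw [hxz])
    set F := Function.extend (fun x : Equiv.Perm (Fin n) => Des x⁻¹) (bx n (d + 1)) 0
    have hFx : ∀ x, bx n (d + 1) x = F (Des x⁻¹) := fun x => (hF.extend_apply 0 x).symm
    have hms : (Finset.univ.filter fun x : Equiv.Perm (Fin n) => Des y⁻¹ ⊆ Des x).val.map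
          (fun x => Des x⁻¹) =
        (Finset.univ.filter fun x : Equiv.Perm (Fin n) => Des y'⁻¹ ⊆ Des x).val.map
          (fun x => Des x⁻¹) := by
      refine Multiset.ext.2 fun K => ?_
      simp only [Multiset.count_map, ← Finset.filter_val, Finset.card_val, Finset.filter_filter,
        eq_comm (a := K)]
      by_cases hK : K ⊆ Finset.Ico 1 n
      · exact card_exact_eq hn (Des_subset _) (Des_subset _) h K hK
      · have : ∀ x : Equiv.Perm (Fin n), Des x⁻¹ ≠ K := by
          rintro x rfl
          exact hK (Des_subset _)
        simp [this]
    rw [bx_succ, bx_succ]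
    simp only [hFx]
    have := congrArg (fun m => (m.map F).sum) hms
    simp only [Multiset.map_map, Function.comp_def] at this
    exact this
end

section
/- For every n ≥ 1, the number of pairs (f,g) of permutations of {1,…,n} satisfying Des(g⁻¹) ⊆ Des(f) and Des(g) ⊇ {1,…,n−2} equals 2^n − 1. -/
/-- `f` is decreasing on the block of positions `< c` and on the block of positions `≥ c`. -/
def AntiBlocks {n : ℕ} (c : ℕ) (f : Equiv.Perm (Fin n)) : Prop :=
  ∀ i j : Fin n, i < j → (j.val < c ∨ c ≤ i.val) → f j < f i

theorem succ_mem_Des {n : ℕ} (f : Equiv.Perm (Fin n)) (i : ℕ) :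
    i + 1 ∈ Des f ↔ ∃ h : i + 1 < n, f ⟨i + 1, h⟩ < f ⟨i, by omega⟩ := by
  simp only [Des, Finset.mem_filter, Finset.mem_Ico, Nat.add_sub_cancel]
  constructor
  · rintro ⟨_, h⟩
    exact h
  · rintro ⟨h, h'⟩
    exact ⟨⟨by omega, h⟩, h, h'⟩

theorem antiBlocks_iff {n : ℕ} (c : ℕ) (f : Equiv.Perm (Fin n)) :
    AntiBlocks c f ↔ ∀ i, i + 1 < n → i + 1 ≠ c → i + 1 ∈ Des f := by
  constructor
  · intro h i hi hc
    rw [succ_mem_Des]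
    refine ⟨hi, h _ _ ?_ ?_⟩
    · simp [Fin.lt_def]
    · simp only
      omega
  · rintro h ⟨i, hi⟩ ⟨j, hj⟩ hij hc
    simp only [Fin.mk_lt_mk] at hij hc
    induction j, hij using Nat.le_induction with
    | base =>
      obtain ⟨_, h'⟩ := (succ_mem_Des f i).1 (h i hj (by omega))
      exact h'
    | succ j hij ih =>
      obtain ⟨_, h'⟩ := (succ_mem_Des f j).1 (h j hj (by omega))
      exact h'.trans (ih (by omega) (by omega))

/-- A block-decreasing permutation is determined by the set of values on its first block:
if `f` and `f'` have the same such set, then `f'⁻¹ ∘ f` is an order automorphism of `Fin n`. -/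
theorem AntiBlocks.unique {n c : ℕ} {f f' : Equiv.Perm (Fin n)} (hf : AntiBlocks c f)
    (hf' : AntiBlocks c f') (h : ∀ i j, f i = f' j → (i.val < c ↔ j.val < c)) : f = f' := by
  have hm : StrictMono (f.trans f'.symm) := by
    intro i j hij
    have hi := h i (f'.symm (f i)) (by simp)
    have hj := h j (f'.symm (f j)) (by simp)
    simp only [Equiv.trans_apply]
    by_contra hcon
    have hne : f'.symm (f j) ≠ f'.symm (f i) := by
      simpa using hij.ne'
    have hlt := lt_of_le_of_ne (not_lt.1 hcon) hne
    have hij' : i.val < j.val := hij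
    have hlt' : (f'.symm (f j)).val < (f'.symm (f i)).val := hlt
    have h1 := hf i j hij (by omega)
    have h2 := hf' _ _ hlt (by omega)
    simp only [Equiv.apply_symm_apply] at h2
    exact lt_asymm h1 h2
  have he : hm.orderIsoOfSurjective _ (f.trans f'.symm).surjective = OrderIso.refl _ :=
    Subsingleton.elim _ _
  ext i : 1
  have := congrArg (fun e : Fin n ≃o Fin n => f' (e i)) he
  simpa using this

/-- Every set `S` is the set of values on the first block of some block-decreasing permutation. -/
theorem exists_antiBlocks {n : ℕ} (S : Finset (Fin n)) :
    ∃ f : Equiv.Perm (Fin n), AntiBlocks S.card f ∧ ∀ i, f i ∈ S ↔ i.val < S.card := by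
  classical
  -- List the elements of `S` before those of its complement, each in decreasing order.
  let key : Fin n → Bool ×ₗ (Fin n)ᵒᵈ := fun v => toLex (decide (v ∉ S), OrderDual.toDual v)
  let f := Tuple.sort key
  have hmono : Monotone (key ∘ f) := Tuple.monotone_sort key
  have hle : ∀ i j, i < j →
      (f i ∈ S ∧ f j ∉ S) ∨ ((f i ∈ S ↔ f j ∈ S) ∧ f j < f i) := by
    intro i j hij
    have h := hmono hij.le
    have hne : f j ≠ f i := by simpa using hij.ne'
    simp only [key, Function.comp, Prod.Lex.toLex_le_toLex, OrderDual.toDual_le_toDual] at h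
    by_cases h1 : f i ∈ S <;> by_cases h2 : f j ∈ S <;> simp [h1, h2] at h ⊢
    · exact lt_of_le_of_ne h hne
    · exact absurd h (by decide)
    · exact lt_of_le_of_ne h hne
  -- The positions of the elements of `S` form an initial segment of length `S.card`.
  have hcard : (Finset.univ.filter fun i => f i ∈ S).card = S.card := by
    refine Finset.card_bij (fun i _ => f i) (by simp) (by simp) ?_
    intro b hb
    exact ⟨f.symm b, by simpa using hb, by simp⟩
  have hmem : ∀ i, f i ∈ S ↔ i.val < S.card := by
    intro i
    constructor
    · intro hi
      have : Finset.Iic i ⊆ Finset.univ.filter fun i => f i ∈ S := by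
        intro j hj
        rcases (Finset.mem_Iic.1 hj).eq_or_lt with rfl | hlt
        · simpa using hi
        · rcases hle j i hlt with h | h
          · simpa using h.1
          · simpa using h.1.2 hi
      have := Finset.card_le_card this
      rw [hcard, Fin.card_Iic] at this
      omega
    · intro hi
      by_contra hcon
      have : (Finset.univ.filter fun i => f i ∈ S) ⊆ Finset.Iio i := by
        intro j hj
        rw [Finset.mem_Iio]
        by_contra hlt
        have hj : f j ∈ S := by simpa using hj
        rcases (not_lt.1 hlt).eq_or_lt with rfl | hlt
        · exact hcon hj
        · rcases hle i j hlt with h | h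
          · exact hcon h.1
          · exact hcon (h.1.2 hj)
      have := Finset.card_le_card this
      rw [hcard, Fin.card_Iio] at this
      omega
  refine ⟨f, ?_, hmem⟩
  intro i j hij hc
  have hij' : i.val < j.val := hij
  rcases hle i j hij with h | h
  · rw [hmem, hmem] at h
    omega
  · exact h.2

theorem mem_Des_inv {m : ℕ} {g : Equiv.Perm (Fin (m + 1))} (hg : AntiBlocks m g) (i : ℕ)
    (hi : i + 1 < m + 1) : i + 1 ∈ Des g⁻¹ ↔ i + 1 ≠ (g (Fin.last m)).val := by
  rw [succ_mem_Des]
  constructor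
  · rintro ⟨h, hlt⟩ heq
    have : (⟨i + 1, h⟩ : Fin (m + 1)) = g (Fin.last m) := Fin.ext heq
    rw [this] at hlt
    rw [show g⁻¹ (g (Fin.last m)) = Fin.last m from g.symm_apply_apply _] at hlt
    exact absurd hlt (not_lt.2 (Fin.le_last _))
  · intro hne
    refine ⟨hi, ?_⟩
    by_contra hcon
    have hne' : g⁻¹ ⟨i, by omega⟩ ≠ g⁻¹ ⟨i + 1, hi⟩ := by
      simp
    have hlt := lt_of_le_of_ne (not_lt.1 hcon) hne'
    have hlast : g⁻¹ ⟨i + 1, hi⟩ ≠ Fin.last m := by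
      intro h
      rw [Equiv.Perm.inv_eq_iff_eq] at h
      exact hne (congrArg Fin.val h)
    have h := hg _ _ hlt (Or.inl (Fin.val_lt_last hlast))
    simp [Fin.lt_def] at h

theorem pair_condition_iff {m : ℕ} (f g : Equiv.Perm (Fin (m + 1))) :
    (Des g⁻¹ ⊆ Des f ∧ Finset.Icc 1 (m + 1 - 2) ⊆ Des g) ↔
      AntiBlocks (g (Fin.last m)).val f ∧ AntiBlocks m g := by
  have hg : Finset.Icc 1 (m + 1 - 2) ⊆ Des g ↔ AntiBlocks m g := by
    rw [antiBlocks_iff]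
    constructor
    · intro h i hi hc
      exact h (Finset.mem_Icc.2 (by omega))
    · intro h i hi
      rw [Finset.mem_Icc] at hi
      obtain ⟨i, rfl⟩ : ∃ j, i = j + 1 := ⟨i - 1, by omega⟩
      exact h i (by omega) (by omega)
  rw [hg]
  refine and_congr_left fun hg => ?_
  rw [antiBlocks_iff]
  constructor
  · intro h i hi hc
    exact h ((mem_Des_inv hg i hi).2 hc)
  · intro h i hi
    have hi' := (Finset.mem_Ico.1 (Finset.mem_filter.1 hi).1)
    obtain ⟨i, rfl⟩ : ∃ j, i = j + 1 := ⟨i - 1, by omega⟩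
    exact h i hi'.2 ((mem_Des_inv hg i hi'.2).1 hi)

/-- The set of the first `k` values of `f`. -/
def firstValues {n : ℕ} (f : Equiv.Perm (Fin n)) (k : ℕ) : Finset (Fin n) :=
  Finset.univ.filter fun v => (f.symm v).val < k

theorem apply_mem_firstValues {n : ℕ} (f : Equiv.Perm (Fin n)) (k : ℕ) (i : Fin n) :
    f i ∈ firstValues f k ↔ i.val < k := by
  simp [firstValues]

theorem card_firstValues {n : ℕ} (f : Equiv.Perm (Fin n)) (k : Fin n) :
    (firstValues f k.val).card = k.val := by
  refine Eq.trans (Eq.symm ?_) (Fin.card_Iio k)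
  refine Finset.card_bij (fun i _ => f i) ?_ (by simp) ?_
  · intro i hi
    rw [apply_mem_firstValues]
    exact Fin.lt_def.1 (Finset.mem_Iio.1 hi)
  · intro v hv
    refine ⟨f.symm v, ?_, by simp⟩
    exact Finset.mem_Iio.2 (Finset.mem_filter.1 hv).2

/-- The number `b_{n,3}(Δ_{n-1})` of pairs `(f,g)` of permutations of `{1,…,n}`
with `Des (g⁻¹) ⊆ Des f` and `Des g ⊇ {1,…,n-2}` equals `2^n - 1`. -/
theorem card_pairs_normal_last_superset (n : ℕ) (hn : 1 ≤ n) :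
    Nat.card {p : Equiv.Perm (Fin n) × Equiv.Perm (Fin n) //
        Des p.2⁻¹ ⊆ Des p.1 ∧ Finset.Icc 1 (n - 2) ⊆ Des p.2} =
      2 ^ n - 1 := by
  obtain ⟨m, rfl⟩ : ∃ m, n = m + 1 := ⟨n - 1, by omega⟩
  have hS : Nat.card {S : Finset (Fin (m + 1)) // S ≠ Finset.univ} = 2 ^ (m + 1) - 1 := by
    rw [Nat.card_eq_fintype_card, Fintype.card_subtype_compl]
    simp
  rw [← hS]
  refine Nat.card_eq_of_bijective
    (fun p => ⟨firstValues p.1.1 (p.1.2 (Fin.last m)).val, fun h => ?_⟩) ⟨?_, ?_⟩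
  · have hc := card_firstValues p.1.1 (p.1.2 (Fin.last m))
    rw [h, Finset.card_univ, Fintype.card_fin] at hc
    omega
  · rintro ⟨⟨f, g⟩, hp⟩ ⟨⟨f', g'⟩, hp'⟩ h
    obtain ⟨hf, hg⟩ := (pair_condition_iff f g).1 hp
    obtain ⟨hf', hg'⟩ := (pair_condition_iff f' g').1 hp'
    replace h : firstValues f (g (Fin.last m)).val = firstValues f' (g' (Fin.last m)).val :=
      congrArg Subtype.val h
    have hk : (g (Fin.last m)).val = (g' (Fin.last m)).val := by
      rw [← card_firstValues f, h, card_firstValues]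
    have hlast : g (Fin.last m) = g' (Fin.last m) := Fin.ext hk
    have hff : f = f' := by
      refine hf.unique (hk ▸ hf') fun i j hij => ?_
      rw [← apply_mem_firstValues f, h, hij, apply_mem_firstValues, hk]
    have hgg : g = g' := by
      refine hg.unique hg' fun i j hij => ?_
      have hl : ∀ i : Fin (m + 1), i.val < m ↔ i ≠ Fin.last m := fun i => by
        rw [ne_eq, Fin.ext_iff, Fin.val_last]
        omega
      rw [hl, hl, ← g.injective.ne_iff, hij, hlast, g'.injective.ne_iff]
    subst hff hgg
    rfl
  · rintro ⟨S, hS⟩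
    have hlt : S.card < m + 1 := by
      simpa using Finset.card_lt_univ_of_notMem
        (Classical.choose_spec (by simpa [Finset.eq_univ_iff_forall] using hS : ∃ x, x ∉ S))
    obtain ⟨f, hf, hfS⟩ := exists_antiBlocks S
    -- `g` is the block-decreasing permutation whose only missing first-block value is `S.card`.
    obtain ⟨g, hg, hgS⟩ := exists_antiBlocks ({⟨S.card, hlt⟩}ᶜ : Finset (Fin (m + 1)))
    have hc : ({⟨S.card, hlt⟩}ᶜ : Finset (Fin (m + 1))).card = m := by
      simp [Finset.card_compl]
    rw [hc] at hg hgS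
    have hlast : g (Fin.last m) = ⟨S.card, hlt⟩ := by
      simpa using hgS (Fin.last m)
    refine ⟨⟨(f, g), (pair_condition_iff f g).2 ⟨by rw [hlast]; exact hf, hg⟩⟩, ?_⟩
    ext v
    obtain ⟨i, rfl⟩ := f.surjective v
    simp only [apply_mem_firstValues, hlast, hfS]
end
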